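/- (Proposition: residue representation) With the zero-drift mostly symmetric setup and running assumptions ε = n^{-α}, δ = n^{-β} (1/2 < α < 2β, α + β > 1, 1/3 < β < 1/2), s_n = Σ_{w∈Γ} (2πi)^{-d} ∫_{N_w} [(1+z_1)···(1+z_{d-1}) / (B(ẑ) · z_1···z_d)] · [(B(ẑ) - z_d^2 A(ẑ)) / (1 - z_d)] · S̄(z)^n dz + O(S(1)^n e_n), where e_n → 0 faster than any fixed power of n. -/

import Mathlib

open Finset Filter MeasureTheory
open scoped Classical Real

noncomputable section

/-- Total weight of walks of length `n` with steps in `S` (weighted by `w`),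
starting at the origin and never leaving `ℕ^d`. -/
def walkWeight (d : ℕ) (S : Finset (Fin d → ℤ)) (w : (Fin d → ℤ) → ℝ) (n : ℕ) : ℝ :=
  ∑ f : Fin n → {i // i ∈ S},
    if ∀ m : ℕ, m ≤ n → ∀ j : Fin d,
        0 ≤ ∑ k ∈ Finset.univ.filter (fun k : Fin n => (k : ℕ) < m), ((f k : Fin d → ℤ) j)
    then ∏ k : Fin n, w (f k) else 0

/-- The step set `S` (with weights `w`) is symmetric over the `k`-th coordinate axis. -/
def SymmetricAxis (d : ℕ) (S : Finset (Fin d → ℤ)) (w : (Fin d → ℤ) → ℝ) (k : Fin d) : Prop :=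
  ∀ i ∈ S, Function.update i k (-(i k)) ∈ S ∧ w (Function.update i k (-(i k))) = w i

namespace ZeroDrift

variable (d : ℕ) (S : Finset (Fin (d + 1) → ℤ)) (w : (Fin (d + 1) → ℤ) → ℝ)

/-- `S(1)`, the total weight of the step set. -/
def S1 : ℝ := ∑ i ∈ S, w i

/-- `A(ẑ)`: the Laurent polynomial collecting steps with last coordinate `-1`. -/
def AC (z : Fin (d + 1) → ℂ) : ℂ :=
  ∑ i ∈ S.filter fun i => i (Fin.last d) = -1,
    (w i : ℂ) * ∏ j : Fin d, z (Fin.castSucc j) ^ (i (Fin.castSucc j))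

/-- `B(ẑ)`: the Laurent polynomial collecting steps with last coordinate `1`. -/
def BC (z : Fin (d + 1) → ℂ) : ℂ :=
  ∑ i ∈ S.filter fun i => i (Fin.last d) = 1,
    (w i : ℂ) * ∏ j : Fin d, z (Fin.castSucc j) ^ (i (Fin.castSucc j))

/-- `Q(ẑ)`: the Laurent polynomial collecting steps with last coordinate `0`. -/
def QC (z : Fin (d + 1) → ℂ) : ℂ :=
  ∑ i ∈ S.filter fun i => i (Fin.last d) = 0,
    (w i : ℂ) * ∏ j : Fin d, z (Fin.castSucc j) ^ (i (Fin.castSucc j))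

/-- The characteristic Laurent polynomial `S(z)` evaluated at `z : ℂ^{d+1}`. -/
def SC (z : Fin (d + 1) → ℂ) : ℂ :=
  ∑ i ∈ S, (w i : ℂ) * ∏ j : Fin (d + 1), z j ^ (i j)

/-- `S̄(z) = S(z_1,…,z_{d},1/z_{d+1})` evaluated at `z : ℂ^{d+1}`. -/
def SbarC (z : Fin (d + 1) → ℂ) : ℂ :=
  ∑ i ∈ S, (w i : ℂ) *
    (∏ j : Fin d, z (Fin.castSucc j) ^ (i (Fin.castSucc j))) *
    z (Fin.last d) ^ (-(i (Fin.last d)))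

/-- The numerator `G(z,t)` of the diagonal representation. -/
def GC (z : Fin (d + 1) → ℂ) (t : ℂ) : ℂ :=
  (∏ j : Fin d, (1 + z (Fin.castSucc j))) *
    (1 - t * (∏ j, z j) * (QC d S w z + 2 * z (Fin.last d) * AC d S w z))

/-- The denominator `H(z,t) = H_1 H_2 H_3` of the diagonal representation. -/
def HC (z : Fin (d + 1) → ℂ) (t : ℂ) : ℂ :=
  (1 - z (Fin.last d)) * (1 - t * (∏ j, z j) * SbarC d S w z) *
    (1 - t * (∏ j, z j) * (QC d S w z + z (Fin.last d) * AC d S w z))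

/-- The point of `ℂ^{d+1}` with coordinates `i^{m_j}` encoded by `m : Fin (d+1) → Fin 4`. -/
def wOf (m : Fin (d + 1) → Fin 4) : Fin (d + 1) → ℂ :=
  fun j => Complex.I ^ (m j : ℕ)

/-- The (indices of the) finite set `Γ` of possible contributing points: `w_j ∈ {±1}` for
`j ≤ d`, `w_{d+1} ∈ {±1,±i}`, and `|1/(w_1⋯w_{d+1} S(w))| = 1/S(1)`. -/
def GammaIdx : Finset (Fin (d + 1) → Fin 4) :=
  Finset.univ.filter fun m =>
    (∀ j : Fin d, m (Fin.castSucc j) = 0 ∨ m (Fin.castSucc j) = 2) ∧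
    ‖1 / ((∏ j, wOf d m j) * SC d S w (wOf d m))‖ = 1 / S1 d S w

/-- The argument (angle) of the point encoded by `m` in coordinate `j`. -/
def argOf (m : Fin (d + 1) → Fin 4) (j : Fin (d + 1)) : ℝ := (m j : ℕ) * π / 2

/-- The box of angles parametrizing the product of arcs `N_w` for `w = wOf m`. -/
def box (m : Fin (d + 1) → Fin 4) (δ : ℝ) : Set (Fin (d + 1) → ℝ) :=
  Set.univ.pi fun j => Set.Ioo (argOf d m j - δ) (argOf d m j + δ)

/-- The parametrization of the torus `|z_j| = 1` (`j ≤ d`), `|z_{d+1}| = 1 - ε`. -/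
def zOf (ε : ℝ) (θ : Fin (d + 1) → ℝ) : Fin (d + 1) → ℂ :=
  fun j => (if j = Fin.last d then (1 - ε : ℂ) else 1) * Complex.exp (Complex.I * θ j)

/-- Angles parametrizing `N = ⋃_{w ∈ Γ} N_w`. -/
def Nparam (δ : ℝ) : Set (Fin (d + 1) → ℝ) := ⋃ m ∈ GammaIdx d S w, box d m δ

/-- The contour integral `(2πi)^{-(d+2)} ∫_{N × C} G/H · dz dt/(z_1⋯z_{d+1}t)^{n+1}`,
parametrized by angles, where `C` is the circle `|t| = r`. -/
def fullIntegral (n : ℕ) (ε δ r : ℝ) : ℂ :=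
  (((2 * π) ^ (d + 2) : ℝ))⁻¹ •
    ∫ θ in Nparam d S w δ,
      ∫ φ in Set.Ioo 0 (2 * π),
        GC d S w (zOf d ε θ) ((r : ℂ) * Complex.exp (Complex.I * φ)) /
            HC d S w (zOf d ε θ) ((r : ℂ) * Complex.exp (Complex.I * φ)) *
          (((∏ j, zOf d ε θ j) * ((r : ℂ) * Complex.exp (Complex.I * φ))) ^ n)⁻¹

/-- The residue integrand
`[(1+z_1)⋯(1+z_d)/(B(ẑ) z_1⋯z_{d+1})]·[(B(ẑ) - z_{d+1}^2 A(ẑ))/(1-z_{d+1})]·S̄(z)^n`,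
parametrized by angles, including the Jacobian factors `i z_j` of `dz_j`. -/
def resIntegrand (n : ℕ) (ε : ℝ) (θ : Fin (d + 1) → ℝ) : ℂ :=
  ((∏ j : Fin d, (1 + zOf d ε θ (Fin.castSucc j))) /
      (BC d S w (zOf d ε θ) * ∏ j, zOf d ε θ j)) *
    ((BC d S w (zOf d ε θ) - zOf d ε θ (Fin.last d) ^ 2 * AC d S w (zOf d ε θ)) /
      (1 - zOf d ε θ (Fin.last d))) *
    SbarC d S w (zOf d ε θ) ^ n *
    ∏ j, Complex.I * zOf d ε θ j

/-- The contour integral `∫_{N_w} (residue integrand) dz` over the product of arcs `N_w`,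
`w = wOf m`, parametrized by angles. -/
def resIntegral (n : ℕ) (ε δ : ℝ) (m : Fin (d + 1) → Fin 4) : ℂ :=
  ∫ θ in box d m δ, resIntegrand d S w n ε θ

end ZeroDrift

namespace ZeroDrift

/-- Total weight, with terminal function `g`, of the `n`-step walks started at `x` all of whose
positions satisfy `P`. -/
def confinedSum {D : ℕ} (P : (Fin D → ℤ) → Prop) (S : Finset (Fin D → ℤ)) (w : (Fin D → ℤ) → ℝ)
    (g : (Fin D → ℤ) → ℂ) : ℕ → (Fin D → ℤ) → ℂ
  | 0, x => if P x then g x else 0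
  | n + 1, x => if P x then ∑ i ∈ S, (w i : ℂ) * confinedSum P S w g n (x + i) else 0

section Confined

variable {D : ℕ} {P : (Fin D → ℤ) → Prop} {S : Finset (Fin D → ℤ)} {w : (Fin D → ℤ) → ℝ}

lemma sum_paths_eq_confinedSum (n : ℕ) (x : Fin D → ℤ) :
    ((∑ f : Fin n → {i // i ∈ S},
      if ∀ m : ℕ, m ≤ n → ∀ j : Fin D,
        0 ≤ x j + ∑ k ∈ Finset.univ.filter (fun k : Fin n => (k : ℕ) < m), ((f k : Fin D → ℤ) j)
      then ∏ k : Fin n, w (f k) else 0 : ℝ) : ℂ) =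
    confinedSum (fun x => ∀ j, 0 ≤ x j) S w (fun _ => 1) n x := by
  induction n generalizing x with
  | zero => simp [confinedSum, apply_ite]
  | succ n ih =>
    rw [confinedSum, ← (Fin.consEquiv fun _ : Fin (n + 1) => {i // i ∈ S}).sum_comp,
      Fintype.sum_prod_type, Complex.ofReal_sum, ← Finset.sum_coe_sort S]
    have key : ∀ (s : {i // i ∈ S}) (f : Fin n → {i // i ∈ S}),
        (∀ m : ℕ, m ≤ n + 1 → ∀ j : Fin D,
          0 ≤ x j + ∑ k ∈ Finset.univ.filter (fun k : Fin (n + 1) => (k : ℕ) < m),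
            (((Fin.cons s f : Fin (n + 1) → {i // i ∈ S}) k : Fin D → ℤ) j)) ↔
        ((∀ j, 0 ≤ x j) ∧ ∀ m : ℕ, m ≤ n → ∀ j : Fin D,
          0 ≤ (x + s) j + ∑ k ∈ Finset.univ.filter (fun k : Fin n => (k : ℕ) < m),
            ((f k : Fin D → ℤ) j)) := by
      intro s f
      have aux : ∀ (m : ℕ) (j : Fin D),
          ∑ k ∈ Finset.univ.filter (fun k : Fin (n + 1) => (k : ℕ) < m + 1),
            (((Fin.cons s f : Fin (n + 1) → {i // i ∈ S}) k : Fin D → ℤ) j) =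
          (s : Fin D → ℤ) j + ∑ k ∈ Finset.univ.filter (fun k : Fin n => (k : ℕ) < m),
            ((f k : Fin D → ℤ) j) := by
        intro m j
        simp [Finset.sum_filter, Fin.sum_univ_succ]
      constructor
      · intro h
        refine ⟨fun j => by simpa using h 0 (by omega) j, fun m hm j => ?_⟩
        have := h (m + 1) (by omega) j
        rw [aux] at this
        simpa [add_assoc] using this
      · rintro ⟨h0, h⟩ m hm j
        cases m with
        | zero => simpa using h0 j
        | succ m =>
          rw [aux]
          simpa [add_assoc] using h m (by omega) j
    by_cases hx : ∀ j, 0 ≤ x j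
    · rw [if_pos hx]
      refine Finset.sum_congr rfl fun s _ => ?_
      rw [← ih, ← Complex.ofReal_mul, Finset.mul_sum]
      congr 1
      refine Finset.sum_congr rfl fun f _ => ?_
      simp only [Fin.consEquiv_apply, key, hx, true_and, mul_ite, mul_zero, implies_true,
        Fin.prod_univ_succ, Fin.cons_zero, Fin.cons_succ]
    · rw [if_neg hx]
      refine Finset.sum_eq_zero fun s _ => ?_
      rw [Complex.ofReal_eq_zero]
      refine Finset.sum_eq_zero fun f _ => if_neg fun h => hx ((key s f).1 h).1

lemma walkWeight_eq_confinedSum (n : ℕ) :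
    (walkWeight D S w n : ℂ) = confinedSum (fun x => ∀ j, 0 ≤ x j) S w (fun _ => 1) n 0 := by
  rw [← sum_paths_eq_confinedSum, walkWeight]
  simp only [Pi.zero_apply, zero_add]

lemma confinedSum_sub (g g' : (Fin D → ℤ) → ℂ) (n : ℕ) (x : Fin D → ℤ) :
    confinedSum P S w (fun y => g y - g' y) n x =
      confinedSum P S w g n x - confinedSum P S w g' n x := by
  induction n generalizing x with
  | zero => by_cases h : P x <;> simp [confinedSum, h]
  | succ n ih =>
    by_cases h : P x <;> simp [confinedSum, h, ih, mul_sub]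

/-- A terminal function odd under a reflection of a symmetric coordinate gives an odd sum. -/
lemma confinedSum_reflect {k : Fin D} (hk : SymmetricAxis D S w k) (c : ℤ)
    {g : (Fin D → ℤ) → ℂ} (hP : ∀ x, P (Function.update x k (c - x k)) ↔ P x)
    (hg : ∀ x, g (Function.update x k (c - x k)) = -g x) (n : ℕ) (x : Fin D → ℤ) :
    confinedSum P S w g n (Function.update x k (c - x k)) = -confinedSum P S w g n x := by
  induction n generalizing x with
  | zero => by_cases h : P x <;> simp [confinedSum, h, hP, hg]
  | succ n ih =>
    by_cases h : P x
    · simp only [confinedSum, hP, h, if_true]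
      rw [← Finset.sum_neg_distrib]
      have inv : ∀ i : Fin D → ℤ, Function.update (Function.update i k (-(i k))) k
          (-(Function.update i k (-(i k)) k)) = i := by
        intro i; simp
      refine Finset.sum_nbij' (fun i => Function.update i k (-(i k)))
        (fun i => Function.update i k (-(i k))) (fun i hi => (hk i hi).1) (fun i hi => (hk i hi).1)
        (fun i _ => inv i) (fun i _ => inv i) fun i hi => ?_
      rw [(hk i hi).2, ← mul_neg, ← ih]
      congr 2
      ext j
      by_cases hj : j = k
      · subst hj; simp; ring
      · simp [hj]
    · simp [confinedSum, h, hP]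

end Confined

section Reflection

variable {d : ℕ} {S : Finset (Fin (d + 1) → ℤ)} {w : (Fin (d + 1) → ℤ) → ℝ}

lemma confinedSum_orthant_eq (hstep : ∀ i ∈ S, (∀ j, i j = -1 ∨ i j = 0 ∨ i j = 1) ∧ i ≠ 0)
    (hsym : ∀ k : Fin d, SymmetricAxis (d + 1) S w (Fin.castSucc k)) (n : ℕ)
    (x : Fin (d + 1) → ℤ) (hx : ∀ j : Fin d, -1 ≤ x j.castSucc) :
    confinedSum (fun x => ∀ j, 0 ≤ x j) S w (fun _ => 1) n x =
      confinedSum (fun x => 0 ≤ x (Fin.last d)) S w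
        (fun x => ∏ j : Fin d, (((x j.castSucc + 1).sign : ℤ) : ℂ)) n x := by
  by_cases hl : 0 ≤ x (Fin.last d)
  · by_cases hp : ∀ j : Fin d, 0 ≤ x j.castSucc
    · have hall : ∀ j, 0 ≤ x j := fun j => Fin.lastCases hl hp j
      cases n with
      | zero =>
        simp only [confinedSum, hall, implies_true, if_true]
        symm
        refine Finset.prod_eq_one fun j _ => ?_
        rw [Int.sign_eq_one_of_pos (by linarith [hp j])]
        simp
      | succ n =>
        simp only [confinedSum, hall, implies_true, if_true]
        refine Finset.sum_congr rfl fun i hi => ?_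
        rw [confinedSum_orthant_eq hstep hsym n]
        intro j
        have := hp j
        rcases (hstep i hi).1 j.castSucc with h | h | h <;> simp [h] <;> omega
    · push Not at hp
      obtain ⟨k, hk⟩ := hp
      have hk1 : x k.castSucc = -1 := by have := hx k; omega
      have hL : confinedSum (fun x => ∀ j, 0 ≤ x j) S w (fun _ => 1) n x = 0 := by
        have : ¬ ∀ j, 0 ≤ x j := fun h => by have := h k.castSucc; omega
        cases n <;> simp only [confinedSum, this, if_false]
      rw [hL]
      have := confinedSum_reflect (P := fun x : Fin (d + 1) → ℤ => 0 ≤ x (Fin.last d)) (hsym k) (-2)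
        (g := fun x => ∏ j : Fin d, (((x j.castSucc + 1).sign : ℤ) : ℂ))
        (fun y => by simp [Function.update_of_ne (Fin.castSucc_lt_last k).ne'])
        (fun y => by
          rw [← Finset.mul_prod_erase _ _ (Finset.mem_univ k),
            ← Finset.mul_prod_erase _ _ (Finset.mem_univ k), ← neg_mul]
          congr 1
          · rw [Function.update_self, ← Int.cast_neg, ← Int.sign_neg]
            congr 2; ring
          · refine Finset.prod_congr rfl fun j hj => ?_
            rw [Function.update_of_ne]
            simpa using (Finset.mem_erase.1 hj).1) n x
      have hfix : Function.update x k.castSucc (-2 - x k.castSucc) = x := by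
        rw [hk1]; conv_rhs => rw [← Function.update_eq_self k.castSucc x, hk1]
        norm_num
      rw [hfix] at this
      exact (self_eq_neg.1 this).symm
  · have : ¬ ∀ j, 0 ≤ x j := fun h => hl (h _)
    cases n <;> simp only [confinedSum, this, hl, if_false]
termination_by n

lemma confinedSum_sign_eq (hsym : ∀ k : Fin d, SymmetricAxis (d + 1) S w (Fin.castSucc k)) (n : ℕ)
    (J : Finset (Fin d)) :
    confinedSum (fun x => 0 ≤ x (Fin.last d)) S w
        (fun x => ∏ j : Fin d, (((x j.castSucc + 1).sign : ℤ) : ℂ)) n 0 =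
      confinedSum (fun x => 0 ≤ x (Fin.last d)) S w
        (fun x => ∏ j : Fin d, if j ∈ J then
          (if x j.castSucc = 0 then 1 else 0) + (if x j.castSucc = -1 then 1 else 0)
          else (((x j.castSucc + 1).sign : ℤ) : ℂ)) n 0 := by
  induction J using Finset.induction_on with
  | empty => simp
  | insert k J hk ih =>
    rw [ih, ← sub_eq_zero, ← confinedSum_sub, ← self_eq_neg]
    have hsign : ∀ t : ℤ, (((t + 1).sign : ℤ) : ℂ) -
        ((if t = 0 then 1 else 0) + (if t = -1 then 1 else 0)) = ((t.sign : ℤ) : ℂ) := by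
      intro t
      rcases lt_trichotomy t 0 with h | h | h
      · rcases eq_or_ne t (-1) with h1 | h1
        · subst h1; simp
        · rw [Int.sign_eq_neg_one_of_neg h, Int.sign_eq_neg_one_of_neg (by omega)]
          simp [h.ne, h1]
      · subst h; simp
      · rw [Int.sign_eq_one_of_pos h, Int.sign_eq_one_of_pos (by omega)]
        simp [h.ne', show t ≠ -1 by omega]
    have hdiff : ∀ y : Fin (d + 1) → ℤ,
        (∏ j : Fin d, if j ∈ J then
          (if y j.castSucc = 0 then 1 else 0) + (if y j.castSucc = -1 then 1 else 0)
          else (((y j.castSucc + 1).sign : ℤ) : ℂ)) -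
        (∏ j : Fin d, if j ∈ insert k J then
          (if y j.castSucc = 0 then 1 else 0) + (if y j.castSucc = -1 then 1 else 0)
          else (((y j.castSucc + 1).sign : ℤ) : ℂ)) =
        (((y k.castSucc).sign : ℤ) : ℂ) * ∏ j ∈ Finset.univ.erase k, if j ∈ J then
          (if y j.castSucc = 0 then 1 else 0) + (if y j.castSucc = -1 then 1 else 0)
          else (((y j.castSucc + 1).sign : ℤ) : ℂ) := by
      intro y
      rw [← Finset.mul_prod_erase _ _ (Finset.mem_univ k),
        ← Finset.mul_prod_erase _ _ (Finset.mem_univ k), if_neg hk,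
        if_pos (Finset.mem_insert_self k J), ← hsign (y k.castSucc), sub_mul]
      refine congrArg₂ _ rfl (congrArg _ (Finset.prod_congr rfl fun j hj => ?_))
      simp [Finset.mem_insert, (Finset.mem_erase.1 hj).1]
    simp only [hdiff]
    have := confinedSum_reflect (P := fun x : Fin (d + 1) → ℤ => 0 ≤ x (Fin.last d)) (hsym k) 0
      (g := fun y => (((y k.castSucc).sign : ℤ) : ℂ) *
        ∏ j ∈ Finset.univ.erase k, if j ∈ J then
          (if y j.castSucc = 0 then 1 else 0) + (if y j.castSucc = -1 then 1 else 0)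
          else (((y j.castSucc + 1).sign : ℤ) : ℂ))
      (fun y => by simp [Function.update_of_ne (Fin.castSucc_lt_last k).ne'])
      (fun y => by
        rw [Function.update_self, zero_sub, Int.sign_neg, Int.cast_neg, neg_mul]
        congr 2
        refine Finset.prod_congr rfl fun j hj => ?_
        rw [Function.update_of_ne]
        simpa using (Finset.mem_erase.1 hj).1) n 0
    have hfix : Function.update (0 : Fin (d + 1) → ℤ) k.castSucc
        (0 - (0 : Fin (d + 1) → ℤ) k.castSucc) = 0 := by
      simp
    rwa [hfix] at this

/-- Reflection principle: the walks confined to the orthant are counted by walks confined to the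
last half-space only, ending at `0` or `-1` in every symmetric coordinate. -/
lemma walkWeight_eq_halfspace
    (hstep : ∀ i ∈ S, (∀ j, i j = -1 ∨ i j = 0 ∨ i j = 1) ∧ i ≠ 0)
    (hsym : ∀ k : Fin d, SymmetricAxis (d + 1) S w (Fin.castSucc k)) (n : ℕ) :
    (walkWeight (d + 1) S w n : ℂ) = confinedSum (fun x => 0 ≤ x (Fin.last d)) S w
        (fun x => ∏ j : Fin d,
          ((if x j.castSucc = 0 then 1 else 0) + (if x j.castSucc = -1 then 1 else 0))) n 0 := by
  rw [walkWeight_eq_confinedSum, confinedSum_orthant_eq hstep hsym n 0 (by simp),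
    confinedSum_sign_eq hsym n Finset.univ]
  simp

end Reflection

end ZeroDrift

namespace ZeroDrift

/-- Total weight of the `n`-step walks on `ℕ` started at `k`, with weights `a`, `q`, `b` of the
steps `-1`, `0`, `1`. -/
def halfLineSum (a q b : ℂ) : ℕ → ℤ → ℂ
  | 0, k => if 0 ≤ k then 1 else 0
  | n + 1, k => if 0 ≤ k then
      a * halfLineSum a q b n (k - 1) + q * halfLineSum a q b n k + b * halfLineSum a q b n (k + 1)
    else 0

lemma norm_halfLineSum_le (a q b : ℂ) (n : ℕ) (k : ℤ) :
    ‖halfLineSum a q b n k‖ ≤ (‖a‖ + ‖q‖ + ‖b‖) ^ n := by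
  induction n generalizing k with
  | zero => by_cases h : 0 ≤ k <;> simp [halfLineSum, h]
  | succ n ih =>
    by_cases h : 0 ≤ k
    · simp only [halfLineSum, h, if_true]
      calc _ ≤ ‖a‖ * ‖halfLineSum a q b n (k - 1)‖ + ‖q‖ * ‖halfLineSum a q b n k‖ +
            ‖b‖ * ‖halfLineSum a q b n (k + 1)‖ := by
            simp only [← norm_mul]; exact norm_add₃_le
        _ ≤ ‖a‖ * (‖a‖ + ‖q‖ + ‖b‖) ^ n + ‖q‖ * (‖a‖ + ‖q‖ + ‖b‖) ^ n +
            ‖b‖ * (‖a‖ + ‖q‖ + ‖b‖) ^ n := by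
            gcongr <;> apply ih
        _ = _ := by ring
    · simp only [halfLineSum, h, if_false, norm_zero]
      positivity

/-- Lebesgue measure on a fundamental domain of angles which contains small neighbourhoods of
`0`, `π/2`, `π`, `3π/2`. -/
def angleMeasure : Measure ℝ := volume.restrict (Set.Ioo (-(π / 4)) (7 * π / 4))

instance : IsFiniteMeasure angleMeasure := by
  unfold angleMeasure; infer_instance

lemma integrable_angleMeasure {f : ℝ → ℂ} (hf : Continuous f) : Integrable f angleMeasure :=
  (hf.integrableOn_Icc (a := -(π / 4)) (b := 7 * π / 4)).mono_set Set.Ioo_subset_Icc_self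

lemma integral_angleMeasure (f : ℝ → ℂ) :
    ∫ φ, f φ ∂angleMeasure = ∫ φ in (-(π / 4))..(7 * π / 4), f φ := by
  rw [intervalIntegral.integral_of_le (by linarith [Real.pi_pos]), integral_Ioc_eq_integral_Ioo,
    angleMeasure]

lemma integral_exp_zpow (m : ℤ) :
    ∫ φ, Complex.exp (Complex.I * φ) ^ m ∂angleMeasure = if m = 0 then 2 * (π : ℂ) else 0 := by
  rw [integral_angleMeasure]
  by_cases hm : m = 0
  · subst hm
    simp only [zpow_zero, intervalIntegral.integral_const, if_true]
    rw [Complex.real_smul]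
    push_cast; ring
  · have hc : (m : ℂ) * Complex.I ≠ 0 := by simp [hm]
    rw [if_neg hm]
    have h : ∀ φ : ℝ, Complex.exp (Complex.I * φ) ^ m = Complex.exp ((m : ℂ) * Complex.I * φ) := by
      intro φ
      rw [← Complex.exp_int_mul]
      ring_nf
    simp only [h]
    rw [integral_exp_mul_complex hc, div_eq_zero_iff]
    left
    rw [sub_eq_zero, Complex.exp_eq_exp_iff_exists_int]
    refine ⟨m, ?_⟩
    push_cast; ring

lemma integral_mul_pow_div {r : ℝ} (h0 : 0 < r) (h1 : r < 1) (p : ℕ) :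
    ∫ φ : ℝ, (r * Complex.exp (Complex.I * φ)) * (r * Complex.exp (Complex.I * φ)) ^ p /
      (1 - r * Complex.exp (Complex.I * φ)) ∂angleMeasure = 0 := by
  set f : ℂ → ℂ := fun z => z * z ^ p / (1 - z) with hf
  have hd : DiffContOnCl ℂ f (Metric.ball 0 |r|) := by
    apply DifferentiableOn.diffContOnCl
    intro z hz
    have hz' : ‖z‖ ≤ r := by
      have := Metric.closure_ball_subset_closedBall hz
      simpa [abs_of_pos h0] using this
    have : 1 - z ≠ 0 := by
      intro h
      rw [sub_eq_zero] at h
      rw [← h] at hz'; simp at hz'; linarith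
    refine DifferentiableAt.differentiableWithinAt ?_
    simp only [hf]
    fun_prop (disch := assumption)
  have h := hd.circleAverage
  rw [Real.circleAverage_def] at h
  have h2 : ∫ φ in (0 : ℝ)..2 * π, f (circleMap 0 r φ) = 0 := by
    have hpi : (2 * π : ℝ)⁻¹ ≠ 0 := by positivity
    have : f 0 = 0 := by simp [hf]
    rw [this] at h
    exact (smul_eq_zero.1 h).resolve_left hpi
  rw [integral_angleMeasure]
  have hper : Function.Periodic (fun φ : ℝ => f (circleMap 0 r φ)) (2 * π) := by
    intro φ
    simp only
    rw [periodic_circleMap]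
  have := hper.intervalIntegral_add_eq (-(π / 4)) 0
  rw [zero_add, h2] at this
  rw [← this, show -(π / 4) + 2 * π = 7 * π / 4 by ring]
  refine intervalIntegral.integral_congr fun φ _ => ?_
  simp only [hf, circleMap, zero_add]
  rw [mul_comm (φ : ℂ)]

lemma circle_ne_zero {r : ℝ} (h0 : 0 < r) (φ : ℝ) : (r : ℂ) * Complex.exp (Complex.I * φ) ≠ 0 :=
  mul_ne_zero (by exact_mod_cast h0.ne') (Complex.exp_ne_zero _)

lemma norm_circle {r : ℝ} (h0 : 0 < r) (φ : ℝ) : ‖(r : ℂ) * Complex.exp (Complex.I * φ)‖ = r := by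
  rw [norm_mul, Complex.norm_exp_I_mul_ofReal, mul_one, Complex.norm_real, Real.norm_of_nonneg h0.le]

lemma one_sub_circle_ne_zero {r : ℝ} (h0 : 0 < r) (h1 : r < 1) (φ : ℝ) :
    1 - (r : ℂ) * Complex.exp (Complex.I * φ) ≠ 0 := by
  intro h
  have := norm_circle h0 φ
  rw [← sub_eq_zero.1 h] at this
  simp at this; linarith

lemma integral_mul_inv_pow_div {r : ℝ} (h0 : 0 < r) (h1 : r < 1) (p : ℕ) :
    ∫ φ : ℝ, (r * Complex.exp (Complex.I * φ)) * (r * Complex.exp (Complex.I * φ))⁻¹ ^ p /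
      (1 - r * Complex.exp (Complex.I * φ)) ∂angleMeasure = if p = 0 then 0 else 2 * (π : ℂ) := by
  have hz := circle_ne_zero h0
  have hz1 := one_sub_circle_ne_zero h0 h1
  induction p with
  | zero => simpa using integral_mul_pow_div h0 h1 0
  | succ p ih =>
    have hsplit : ∀ φ : ℝ, (r * Complex.exp (Complex.I * φ)) *
        (r * Complex.exp (Complex.I * φ))⁻¹ ^ (p + 1) / (1 - r * Complex.exp (Complex.I * φ)) =
        (r * Complex.exp (Complex.I * φ)) * (r * Complex.exp (Complex.I * φ))⁻¹ ^ p /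
          (1 - r * Complex.exp (Complex.I * φ)) +
        (r : ℂ)⁻¹ ^ p * Complex.exp (Complex.I * φ) ^ (-(p : ℤ)) := by
      intro φ
      have e : (r : ℂ)⁻¹ ^ p * Complex.exp (Complex.I * φ) ^ (-(p : ℤ)) =
          (r * Complex.exp (Complex.I * φ))⁻¹ ^ p := by
        rw [zpow_neg, zpow_natCast, mul_inv, mul_pow, inv_pow (Complex.exp _)]
      rw [e]
      have a1 := hz φ
      have a2 := hz1 φ
      generalize (r : ℂ) * Complex.exp (Complex.I * φ) = z at *
      rw [pow_succ]
      field_simp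
      ring
    simp only [hsplit]
    rw [integral_add, ih, integral_const_mul, integral_exp_zpow]
    · rcases p with _ | p
      · simp
      · have : -((p + 1 : ℕ) : ℤ) ≠ 0 := by simp; omega
        simp only [this, if_false]
        simp
    · apply integrable_angleMeasure
      fun_prop (disch := first | exact hz | exact hz1 | simp)
    · apply integrable_angleMeasure
      have : ∀ φ : ℝ, Complex.exp (Complex.I * φ) ≠ 0 := fun φ => Complex.exp_ne_zero _
      simp only [zpow_neg, zpow_natCast]
      fun_prop (disch := intro φ; exact pow_ne_zero _ (this φ))

/-- The reflected kernel of the half-line walk started at `p - 1`. -/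
def halfLineKernel (c : ℂ) (p : ℕ) (z : ℂ) : ℂ := z * (z⁻¹ ^ p - c ^ p * z ^ p) / (1 - z)

lemma continuous_halfLineKernel {r : ℝ} (h0 : 0 < r) (h1 : r < 1) (c : ℂ) (p : ℕ) :
    Continuous fun φ : ℝ => halfLineKernel c p (r * Complex.exp (Complex.I * φ)) := by
  have hz := circle_ne_zero h0
  have hz1 := one_sub_circle_ne_zero h0 h1
  unfold halfLineKernel
  fun_prop (disch := first | exact hz | exact hz1)

lemma integral_halfLineKernel {r : ℝ} (h0 : 0 < r) (h1 : r < 1) (a q : ℂ) {b : ℂ} (hb : b ≠ 0)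
    (n p : ℕ) :
    ∫ φ : ℝ, halfLineKernel (a / b) p (r * Complex.exp (Complex.I * φ)) *
      (q + a * (r * Complex.exp (Complex.I * φ)) + b * (r * Complex.exp (Complex.I * φ))⁻¹) ^ n
      ∂angleMeasure = 2 * (π : ℂ) * halfLineSum a q b n ((p : ℤ) - 1) := by
  have hz := circle_ne_zero h0
  have hz1 := one_sub_circle_ne_zero h0 h1
  have hint : ∀ p n : ℕ, Integrable (fun φ : ℝ =>
      halfLineKernel (a / b) p (r * Complex.exp (Complex.I * φ)) *
      (q + a * (r * Complex.exp (Complex.I * φ)) + b * (r * Complex.exp (Complex.I * φ))⁻¹) ^ n)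
      angleMeasure := by
    intro p n
    apply integrable_angleMeasure
    refine (continuous_halfLineKernel h0 h1 _ p).mul ?_
    fun_prop (disch := exact hz)
  induction n generalizing p with
  | zero =>
    have hs : ∀ φ : ℝ, halfLineKernel (a / b) p (r * Complex.exp (Complex.I * φ)) =
        (r * Complex.exp (Complex.I * φ)) * (r * Complex.exp (Complex.I * φ))⁻¹ ^ p /
          (1 - r * Complex.exp (Complex.I * φ)) - (a / b) ^ p *
        ((r * Complex.exp (Complex.I * φ)) * (r * Complex.exp (Complex.I * φ)) ^ p /
          (1 - r * Complex.exp (Complex.I * φ))) := by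
      intro φ
      unfold halfLineKernel
      ring
    simp only [pow_zero, mul_one, hs]
    rw [integral_sub, integral_mul_inv_pow_div h0 h1, integral_const_mul,
      integral_mul_pow_div h0 h1]
    · rcases p with _ | p <;> simp [halfLineSum]
    · apply integrable_angleMeasure
      fun_prop (disch := first | exact hz | exact hz1 | simp)
    · apply integrable_angleMeasure
      fun_prop (disch := first | exact hz | exact hz1 | simp)
  | succ n ih =>
    rcases p with _ | p
    · simp [halfLineKernel, halfLineSum]
    · have hrec : ∀ φ : ℝ, halfLineKernel (a / b) (p + 1) (r * Complex.exp (Complex.I * φ)) *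
          (q + a * (r * Complex.exp (Complex.I * φ)) +
            b * (r * Complex.exp (Complex.I * φ))⁻¹) ^ (n + 1) =
          a * (halfLineKernel (a / b) p (r * Complex.exp (Complex.I * φ)) *
          (q + a * (r * Complex.exp (Complex.I * φ)) +
            b * (r * Complex.exp (Complex.I * φ))⁻¹) ^ n) +
          q * (halfLineKernel (a / b) (p + 1) (r * Complex.exp (Complex.I * φ)) *
          (q + a * (r * Complex.exp (Complex.I * φ)) +
            b * (r * Complex.exp (Complex.I * φ))⁻¹) ^ n) +
          b * (halfLineKernel (a / b) (p + 2) (r * Complex.exp (Complex.I * φ)) *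
          (q + a * (r * Complex.exp (Complex.I * φ)) +
            b * (r * Complex.exp (Complex.I * φ))⁻¹) ^ n) := by
        intro φ
        have a1 := hz φ
        have a2 := hz1 φ
        generalize (r : ℂ) * Complex.exp (Complex.I * φ) = z at *
        have hk : halfLineKernel (a / b) (p + 1) z * (q + a * z + b * z⁻¹) =
            a * halfLineKernel (a / b) p z + q * halfLineKernel (a / b) (p + 1) z +
            b * halfLineKernel (a / b) (p + 2) z := by
          have e1 : a = b * (a / b) := by field_simp
          generalize a / b = c at *
          subst e1
          unfold halfLineKernel
          simp only [pow_succ]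
          generalize z⁻¹ ^ p = x
          field_simp
          ring
        rw [pow_succ' _ n, ← mul_assoc, hk]
        ring
      simp only [hrec]
      rw [integral_add, integral_add, integral_const_mul, integral_const_mul, integral_const_mul,
        ih, ih, ih]
      · have : (0 : ℤ) ≤ ((p + 1 : ℕ) : ℤ) - 1 := by push_cast; omega
        simp only [halfLineSum, this, if_true]
        push_cast
        ring_nf
      · exact (hint p n).const_mul _
      · exact (hint (p + 1) n).const_mul _
      · exact ((hint p n).const_mul _).add ((hint (p + 1) n).const_mul _)
      · exact (hint (p + 2) n).const_mul _

end ZeroDrift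

namespace ZeroDrift

section ExactFormula

variable {d : ℕ} {S : Finset (Fin (d + 1) → ℤ)} {w : (Fin (d + 1) → ℤ) → ℝ}

lemma zOf_castSucc (ε : ℝ) (θ : Fin (d + 1) → ℝ) (j : Fin d) :
    zOf d ε θ j.castSucc = Complex.exp (Complex.I * θ j.castSucc) := by
  simp [zOf, (Fin.castSucc_lt_last j).ne]

lemma zOf_last (ε : ℝ) (θ : Fin (d + 1) → ℝ) :
    zOf d ε θ (Fin.last d) = ((1 - ε : ℝ) : ℂ) * Complex.exp (Complex.I * θ (Fin.last d)) := by
  simp [zOf]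

lemma AC_congr {z z' : Fin (d + 1) → ℂ} (h : ∀ j : Fin d, z j.castSucc = z' j.castSucc) :
    AC d S w z = AC d S w z' := by
  simp only [AC, h]

lemma BC_congr {z z' : Fin (d + 1) → ℂ} (h : ∀ j : Fin d, z j.castSucc = z' j.castSucc) :
    BC d S w z = BC d S w z' := by
  simp only [BC, h]

lemma QC_congr {z z' : Fin (d + 1) → ℂ} (h : ∀ j : Fin d, z j.castSucc = z' j.castSucc) :
    QC d S w z = QC d S w z' := by
  simp only [QC, h]

lemma sum_split_last {M : Type*} [AddCommMonoid M]
    (hstep : ∀ i ∈ S, (∀ j, i j = -1 ∨ i j = 0 ∨ i j = 1) ∧ i ≠ 0) (f : (Fin (d + 1) → ℤ) → M) :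
    ∑ i ∈ S, f i = (∑ i ∈ S.filter fun i => i (Fin.last d) = -1, f i) +
      (∑ i ∈ S.filter fun i => i (Fin.last d) = 0, f i) +
      ∑ i ∈ S.filter fun i => i (Fin.last d) = 1, f i := by
  simp only [Finset.sum_filter]
  rw [← Finset.sum_add_distrib, ← Finset.sum_add_distrib]
  refine Finset.sum_congr rfl fun i hi => ?_
  rcases (hstep i hi).1 (Fin.last d) with h | h | h <;> simp [h]

lemma SbarC_eq (hstep : ∀ i ∈ S, (∀ j, i j = -1 ∨ i j = 0 ∨ i j = 1) ∧ i ≠ 0)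
    (z : Fin (d + 1) → ℂ) :
    SbarC d S w z = QC d S w z + AC d S w z * z (Fin.last d) +
      BC d S w z * (z (Fin.last d))⁻¹ := by
  rw [SbarC, sum_split_last hstep, AC, QC, BC, Finset.sum_mul, Finset.sum_mul,
    add_comm (∑ i ∈ S.filter fun i => i (Fin.last d) = -1, _)]
  congr 1
  · congr 1
    · refine Finset.sum_congr rfl fun i hi => ?_
      rw [(Finset.mem_filter.1 hi).2]; simp
    · refine Finset.sum_congr rfl fun i hi => ?_
      rw [(Finset.mem_filter.1 hi).2]; simp
  · refine Finset.sum_congr rfl fun i hi => ?_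
    rw [(Finset.mem_filter.1 hi).2]; simp

lemma confinedSum_character (hstep : ∀ i ∈ S, (∀ j, i j = -1 ∨ i j = 0 ∨ i j = 1) ∧ i ≠ 0)
    {z : Fin (d + 1) → ℂ} (hz : ∀ j : Fin d, z j.castSucc ≠ 0) (n : ℕ) (x : Fin (d + 1) → ℤ) :
    confinedSum (fun x => 0 ≤ x (Fin.last d)) S w
        (fun x => ∏ j : Fin d, z j.castSucc ^ x j.castSucc) n x =
      (∏ j : Fin d, z j.castSucc ^ x j.castSucc) *
        halfLineSum (AC d S w z) (QC d S w z) (BC d S w z) n (x (Fin.last d)) := by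
  induction n generalizing x with
  | zero => by_cases h : 0 ≤ x (Fin.last d) <;> simp [confinedSum, halfLineSum, h]
  | succ n ih =>
    by_cases h : 0 ≤ x (Fin.last d)
    · simp only [confinedSum, halfLineSum, h, if_true, ih]
      have hprod : ∀ i : Fin (d + 1) → ℤ, ∏ j : Fin d, z j.castSucc ^ (x + i) j.castSucc =
          (∏ j : Fin d, z j.castSucc ^ x j.castSucc) *
            ∏ j : Fin d, z j.castSucc ^ i j.castSucc := by
        intro i
        rw [← Finset.prod_mul_distrib]
        exact Finset.prod_congr rfl fun j _ => zpow_add₀ (hz j) _ _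
      rw [sum_split_last hstep, AC, QC, BC, mul_add, mul_add, Finset.sum_mul, Finset.sum_mul,
        Finset.sum_mul, Finset.mul_sum, Finset.mul_sum, Finset.mul_sum]
      congr 1
      · congr 1
        · refine Finset.sum_congr rfl fun i hi => ?_
          rw [hprod, Pi.add_apply x i (Fin.last d), (Finset.mem_filter.1 hi).2, ← sub_eq_add_neg]
          ring
        · refine Finset.sum_congr rfl fun i hi => ?_
          rw [hprod, Pi.add_apply x i (Fin.last d), (Finset.mem_filter.1 hi).2, add_zero]
          ring
      · refine Finset.sum_congr rfl fun i hi => ?_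
        rw [hprod, Pi.add_apply x i (Fin.last d), (Finset.mem_filter.1 hi).2]
        ring
    · simp [confinedSum, halfLineSum, h]

lemma confinedSum_const_mul {D : ℕ} {P : (Fin D → ℤ) → Prop} {S : Finset (Fin D → ℤ)}
    {w : (Fin D → ℤ) → ℝ} (c : ℂ) (g : (Fin D → ℤ) → ℂ) (n : ℕ) (x : Fin D → ℤ) :
    confinedSum P S w (fun y => c * g y) n x = c * confinedSum P S w g n x := by
  induction n generalizing x with
  | zero => by_cases h : P x <;> simp [confinedSum, h]
  | succ n ih =>
    by_cases h : P x <;> simp [confinedSum, h, ih, Finset.mul_sum, mul_left_comm]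

lemma confinedSum_integral {D : ℕ} {P : (Fin D → ℤ) → Prop} {S : Finset (Fin D → ℤ)}
    {w : (Fin D → ℤ) → ℝ} {Ω : Type*} [MeasurableSpace Ω] {μ : Measure Ω}
    {G : Ω → (Fin D → ℤ) → ℂ} (hG : ∀ x, Integrable (fun t => G t x) μ) (n : ℕ)
    (x : Fin D → ℤ) :
    Integrable (fun t => confinedSum P S w (G t) n x) μ ∧
    confinedSum P S w (fun y => ∫ t, G t y ∂μ) n x = ∫ t, confinedSum P S w (G t) n x ∂μ := by
  induction n generalizing x with
  | zero => by_cases h : P x <;> simp [confinedSum, h, hG]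
  | succ n ih =>
    by_cases h : P x
    · simp only [confinedSum, h, if_true]
      have hi : ∀ i ∈ S, Integrable (fun t => (w i : ℂ) * confinedSum P S w (G t) n (x + i)) μ :=
        fun i _ => (ih (x + i)).1.const_mul _
      refine ⟨integrable_finsetSum _ hi, ?_⟩
      rw [integral_finsetSum _ hi]
      refine Finset.sum_congr rfl fun i _ => ?_
      rw [(ih (x + i)).2, integral_const_mul]
    · simp [confinedSum, h]

lemma integral_torus_character (x : Fin (d + 1) → ℤ) :
    ∫ θ : Fin d → ℝ, ∏ j : Fin d, ((1 + Complex.exp (Complex.I * θ j)) *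
        Complex.exp (Complex.I * θ j) ^ x j.castSucc) ∂(Measure.pi fun _ => angleMeasure) =
      (2 * (π : ℂ)) ^ d * ∏ j : Fin d,
        ((if x j.castSucc = 0 then 1 else 0) + (if x j.castSucc = -1 then 1 else 0)) := by
  rw [integral_fintype_prod_eq_prod (fun (j : Fin d) (t : ℝ) =>
    (1 + Complex.exp (Complex.I * t)) * Complex.exp (Complex.I * t) ^ x j.castSucc)]
  have hI : ∀ m : ℤ, Integrable (fun t : ℝ => Complex.exp (Complex.I * t) ^ m) angleMeasure := by
    intro m
    apply integrable_angleMeasure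
    have : ∀ t : ℝ, Complex.exp (Complex.I * t) ^ m = Complex.exp (m * (Complex.I * t)) :=
      fun t => (Complex.exp_int_mul _ _).symm
    simp only [this]
    fun_prop
  have : ∀ j : Fin d, ∫ t : ℝ, (1 + Complex.exp (Complex.I * t)) *
      Complex.exp (Complex.I * t) ^ x j.castSucc ∂angleMeasure = (2 * (π : ℂ)) *
        ((if x j.castSucc = 0 then 1 else 0) + (if x j.castSucc = -1 then 1 else 0)) := by
    intro j
    have h : ∀ t : ℝ, (1 + Complex.exp (Complex.I * t)) *
        Complex.exp (Complex.I * t) ^ x j.castSucc =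
        Complex.exp (Complex.I * t) ^ x j.castSucc +
          Complex.exp (Complex.I * t) ^ (x j.castSucc + 1) := by
      intro t
      rw [zpow_add_one₀ (Complex.exp_ne_zero _)]; ring
    simp only [h]
    rw [integral_add (hI _) (hI _), integral_exp_zpow, integral_exp_zpow, mul_add]
    simp only [mul_ite, mul_one, mul_zero, ← eq_neg_iff_add_eq_zero]
  simp only [this]
  rw [Finset.prod_mul_distrib, Finset.prod_const, Finset.card_univ, Fintype.card_fin]

/-- The point of `ℂ^{d+1}` with unimodular coordinates of arguments `θ`, and last coordinate `1`. -/
def unitPoint (θ : Fin d → ℝ) : Fin (d + 1) → ℂ :=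
  Fin.snoc (α := fun _ => ℂ) (fun j => Complex.exp (Complex.I * θ j)) 1

lemma unitPoint_castSucc (θ : Fin d → ℝ) (j : Fin d) :
    unitPoint θ j.castSucc = Complex.exp (Complex.I * θ j) := by
  simp [unitPoint]

lemma integrable_pi_angleMeasure {m : ℕ} {f : (Fin m → ℝ) → ℂ} (hf : AEStronglyMeasurable f)
    {C : ℝ} (hC : ∀ θ, ‖f θ‖ ≤ C) : Integrable f (Measure.pi fun _ => angleMeasure) := by
  refine Integrable.of_bound (C := C) ?_ (Eventually.of_forall hC)
  simp only [angleMeasure]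
  rw [← Measure.restrict_pi_pi]
  exact hf.restrict

lemma walkWeight_eq_integral (hstep : ∀ i ∈ S, (∀ j, i j = -1 ∨ i j = 0 ∨ i j = 1) ∧ i ≠ 0)
    (hsym : ∀ k : Fin d, SymmetricAxis (d + 1) S w (Fin.castSucc k)) (n : ℕ) :
    (2 * (π : ℂ)) ^ d * (walkWeight (d + 1) S w n : ℂ) =
      ∫ θ : Fin d → ℝ, (∏ j : Fin d, (1 + Complex.exp (Complex.I * θ j))) *
        halfLineSum (AC d S w (unitPoint θ)) (QC d S w (unitPoint θ)) (BC d S w (unitPoint θ)) n 0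
        ∂(Measure.pi fun _ => angleMeasure) := by
  rw [walkWeight_eq_halfspace hstep hsym, ← confinedSum_const_mul]
  simp only [← integral_torus_character]
  rw [(confinedSum_integral (fun x => ?_) n 0).2]
  · congr 1
    ext θ
    simp only [Finset.prod_mul_distrib]
    rw [confinedSum_const_mul]
    have := confinedSum_character (w := w) hstep (z := unitPoint θ)
      (fun j => by rw [unitPoint_castSucc]; exact Complex.exp_ne_zero _) n 0
    simp only [unitPoint_castSucc] at this
    rw [this]
    simp
  · have : ∀ (t : ℝ) (m : ℤ), Complex.exp (Complex.I * t) ^ m = Complex.exp (m * (Complex.I * t)) :=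
      fun t m => (Complex.exp_int_mul _ _).symm
    refine integrable_pi_angleMeasure (C := 2 ^ d) ?_ fun θ => ?_
    · simp only [this]
      refine Continuous.aestronglyMeasurable ?_
      fun_prop
    · rw [norm_prod]
      refine (Finset.prod_le_prod (fun _ _ => norm_nonneg _) (fun j _ => ?_)).trans
        (b := ∏ _j : Fin d, (2 : ℝ)) (by simp)
      rw [norm_mul, norm_zpow, Complex.norm_exp_I_mul_ofReal, one_zpow, mul_one]
      refine (norm_add_le _ _).trans ?_
      rw [Complex.norm_exp_I_mul_ofReal, norm_one]; norm_num

end ExactFormula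

end ZeroDrift

namespace ZeroDrift

section TorusIntegrand

variable {d : ℕ} {S : Finset (Fin (d + 1) → ℤ)} {w : (Fin (d + 1) → ℤ) → ℝ}

/-- The integrand on the torus whose integral is the number of walks: the residue integrand where
`|B| ≥ ρ`, and the half-line sum, which needs no division by `B`, elsewhere. -/
def torusIntegrand (S : Finset (Fin (d + 1) → ℤ)) (w : (Fin (d + 1) → ℤ) → ℝ) (ρ : ℝ) (n : ℕ)
    (ε : ℝ) (θ : Fin (d + 1) → ℝ) : ℂ :=
  (∏ j : Fin d, (1 + Complex.exp (Complex.I * θ j.castSucc))) *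
    if ‖BC d S w (zOf d ε θ)‖ < ρ then
      halfLineSum (AC d S w (zOf d ε θ)) (QC d S w (zOf d ε θ)) (BC d S w (zOf d ε θ)) n 0
    else halfLineKernel (AC d S w (zOf d ε θ) / BC d S w (zOf d ε θ)) 1 (zOf d ε θ (Fin.last d)) *
      SbarC d S w (zOf d ε θ) ^ n

lemma zOf_ne_zero {ε : ℝ} (h1 : ε < 1) (θ : Fin (d + 1) → ℝ) (j : Fin (d + 1)) :
    zOf d ε θ j ≠ 0 := by
  refine Fin.lastCases ?_ (fun j => ?_) j
  · rw [zOf_last]; exact circle_ne_zero (by linarith) _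
  · rw [zOf_castSucc]; exact Complex.exp_ne_zero _

lemma norm_zOf_castSucc (ε : ℝ) (θ : Fin (d + 1) → ℝ) (j : Fin d) :
    ‖zOf d ε θ j.castSucc‖ = 1 := by
  rw [zOf_castSucc, Complex.norm_exp_I_mul_ofReal]

lemma norm_zOf_last {ε : ℝ} (h1 : ε < 1) (θ : Fin (d + 1) → ℝ) :
    ‖zOf d ε θ (Fin.last d)‖ = 1 - ε := by
  rw [zOf_last]; exact norm_circle (by linarith) _

lemma le_norm_one_sub_zOf_last {ε : ℝ} (h1 : ε < 1) (θ : Fin (d + 1) → ℝ) :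
    ε ≤ ‖1 - zOf d ε θ (Fin.last d)‖ := by
  have := norm_sub_norm_le (1 : ℂ) (zOf d ε θ (Fin.last d))
  rw [norm_zOf_last h1, norm_one] at this
  linarith

lemma resIntegrand_eq {ρ ε : ℝ} (h0 : 0 < ε) (h1 : ε < 1) (hρ : 0 < ρ) (n : ℕ)
    {θ : Fin (d + 1) → ℝ} (hB : ρ ≤ ‖BC d S w (zOf d ε θ)‖) :
    resIntegrand d S w n ε θ = Complex.I ^ (d + 1) * torusIntegrand S w ρ n ε θ := by
  have hB0 : BC d S w (zOf d ε θ) ≠ 0 := by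
    intro h; rw [h, norm_zero] at hB; linarith
  have hz := zOf_ne_zero h1 θ
  have hp : ∏ j, zOf d ε θ j ≠ 0 := Finset.prod_ne_zero_iff.2 fun j _ => hz j
  have hl := hz (Fin.last d)
  have hl1 : 1 - zOf d ε θ (Fin.last d) ≠ 0 := by
    intro h
    have := le_norm_one_sub_zOf_last h1 θ
    rw [h, norm_zero] at this; linarith
  rw [torusIntegrand, if_neg (not_lt.2 hB), resIntegrand, Finset.prod_mul_distrib,
    Finset.prod_const, Finset.card_univ, Fintype.card_fin, halfLineKernel]
  simp only [zOf_castSucc]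
  generalize ∏ j, zOf d ε θ j = p at *
  generalize BC d S w (zOf d ε θ) = b at *
  generalize zOf d ε θ (Fin.last d) = z at *
  simp only [pow_one]
  field_simp

lemma norm_character_sum_le (hw : ∀ i ∈ S, 0 < w i) {T : Finset (Fin (d + 1) → ℤ)} (hT : T ⊆ S)
    {z : Fin (d + 1) → ℂ} (hz : ∀ j : Fin d, ‖z j.castSucc‖ = 1) :
    ‖∑ i ∈ T, (w i : ℂ) * ∏ j : Fin d, z j.castSucc ^ i j.castSucc‖ ≤ ∑ i ∈ T, w i := by
  refine (norm_sum_le _ _).trans (Finset.sum_le_sum fun i hi => ?_)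
  rw [norm_mul, Complex.norm_real, Real.norm_of_nonneg (hw i (hT hi)).le, norm_prod]
  simp [norm_zpow, hz]

lemma S1_eq (hstep : ∀ i ∈ S, (∀ j, i j = -1 ∨ i j = 0 ∨ i j = 1) ∧ i ≠ 0) :
    S1 d S w = (∑ i ∈ S.filter fun i => i (Fin.last d) = -1, w i) +
      (∑ i ∈ S.filter fun i => i (Fin.last d) = 0, w i) +
      ∑ i ∈ S.filter fun i => i (Fin.last d) = 1, w i :=
  sum_split_last hstep w

lemma norm_AC_add_norm_QC_le (hstep : ∀ i ∈ S, (∀ j, i j = -1 ∨ i j = 0 ∨ i j = 1) ∧ i ≠ 0)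
    (hw : ∀ i ∈ S, 0 < w i) {z : Fin (d + 1) → ℂ} (hz : ∀ j : Fin d, ‖z j.castSucc‖ = 1) :
    ‖AC d S w z‖ + ‖QC d S w z‖ ≤
      S1 d S w - ∑ i ∈ S.filter fun i => i (Fin.last d) = 1, w i := by
  rw [S1_eq hstep, add_sub_cancel_right]
  exact add_le_add (norm_character_sum_le hw (Finset.filter_subset _ _) hz)
    (norm_character_sum_le hw (Finset.filter_subset _ _) hz)

lemma norm_coeffs_le (hstep : ∀ i ∈ S, (∀ j, i j = -1 ∨ i j = 0 ∨ i j = 1) ∧ i ≠ 0)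
    (hw : ∀ i ∈ S, 0 < w i) {z : Fin (d + 1) → ℂ} (hz : ∀ j : Fin d, ‖z j.castSucc‖ = 1) :
    ‖AC d S w z‖ + ‖QC d S w z‖ + ‖BC d S w z‖ ≤ S1 d S w := by
  have h1 := norm_AC_add_norm_QC_le hstep hw hz
  have h2 : ‖BC d S w z‖ ≤ _ := norm_character_sum_le hw (Finset.filter_subset _ _) hz
  linarith

lemma norm_prod_one_add_exp_le (θ : Fin (d + 1) → ℝ) :
    ‖∏ j : Fin d, (1 + Complex.exp (Complex.I * θ j.castSucc))‖ ≤ 2 ^ d := by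
  rw [norm_prod]
  refine (Finset.prod_le_prod (fun _ _ => norm_nonneg _) (fun j _ => ?_)).trans
    (b := ∏ _j : Fin d, (2 : ℝ)) (by simp)
  refine (norm_add_le _ _).trans ?_
  rw [Complex.norm_exp_I_mul_ofReal, norm_one]; norm_num

lemma norm_torusIntegrand_le_of_lt {ρ ε : ℝ} (n : ℕ) {θ : Fin (d + 1) → ℝ}
    (hB : ‖BC d S w (zOf d ε θ)‖ < ρ) :
    ‖torusIntegrand S w ρ n ε θ‖ ≤ 2 ^ d * (‖AC d S w (zOf d ε θ)‖ +
      ‖QC d S w (zOf d ε θ)‖ + ‖BC d S w (zOf d ε θ)‖) ^ n := by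
  rw [torusIntegrand, if_pos hB, norm_mul]
  gcongr
  · exact norm_prod_one_add_exp_le θ
  · exact norm_halfLineSum_le _ _ _ _ _

lemma norm_torusIntegrand_le_of_le
    (hstep : ∀ i ∈ S, (∀ j, i j = -1 ∨ i j = 0 ∨ i j = 1) ∧ i ≠ 0)
    (hw : ∀ i ∈ S, 0 < w i) {ρ ε : ℝ} (h0 : 0 < ε) (h1 : ε < 1) (hρ : 0 < ρ) (n : ℕ)
    {θ : Fin (d + 1) → ℝ} (hB : ρ ≤ ‖BC d S w (zOf d ε θ)‖) :
    ‖torusIntegrand S w ρ n ε θ‖ ≤ 2 ^ d * ((1 + S1 d S w / ρ) / ε *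
      ‖SbarC d S w (zOf d ε θ)‖ ^ n) := by
  rw [torusIntegrand, if_neg (not_lt.2 hB), norm_mul, norm_mul, norm_pow]
  have hA : ‖AC d S w (zOf d ε θ)‖ ≤ S1 d S w := by
    have := norm_coeffs_le hstep hw (norm_zOf_castSucc ε θ)
    linarith [norm_nonneg (QC d S w (zOf d ε θ)), norm_nonneg (BC d S w (zOf d ε θ))]
  have hS : 0 ≤ S1 d S w := (norm_nonneg _).trans hA
  have hl := zOf_ne_zero h1 θ (Fin.last d)
  have hl' := norm_zOf_last h1 θ
  have hl1 := le_norm_one_sub_zOf_last h1 θ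
  gcongr
  · exact norm_prod_one_add_exp_le θ
  · have e : halfLineKernel (AC d S w (zOf d ε θ) / BC d S w (zOf d ε θ)) 1
        (zOf d ε θ (Fin.last d)) = (1 - (AC d S w (zOf d ε θ) / BC d S w (zOf d ε θ)) *
          zOf d ε θ (Fin.last d) ^ 2) / (1 - zOf d ε θ (Fin.last d)) := by
      rw [halfLineKernel, pow_one, pow_one, pow_one, mul_sub, mul_inv_cancel₀ hl]
      ring
    rw [e, norm_div]
    refine div_le_div₀ (by positivity) ?_ h0 hl1
    refine (norm_sub_le _ _).trans ?_
    rw [norm_one, norm_mul, norm_div, norm_pow, hl']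
    gcongr
    calc _ ≤ S1 d S w / ρ * 1 := by
          gcongr
          exact pow_le_one₀ (by linarith) (by linarith)
      _ = _ := mul_one _

lemma continuous_zOf (ε : ℝ) (j : Fin (d + 1)) : Continuous fun θ => zOf d ε θ j := by
  unfold zOf
  fun_prop

lemma continuous_character_sum {ε : ℝ} (h1 : ε < 1) (T : Finset (Fin (d + 1) → ℤ)) :
    Continuous fun θ => ∑ i ∈ T, (w i : ℂ) * ∏ j : Fin d,
      zOf d ε θ j.castSucc ^ i j.castSucc := by
  refine continuous_finsetSum _ fun i _ => continuous_const.mul ?_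
  exact continuous_finsetProd _ fun j _ =>
    (continuous_zOf ε _).zpow₀ _ fun θ => Or.inl (zOf_ne_zero h1 θ _)

lemma continuous_halfLineSum {X : Type*} [TopologicalSpace X] {a q b : X → ℂ} (ha : Continuous a)
    (hq : Continuous q) (hb : Continuous b) (n : ℕ) (k : ℤ) :
    Continuous fun x => halfLineSum (a x) (q x) (b x) n k := by
  induction n generalizing k with
  | zero => simp only [halfLineSum]; fun_prop
  | succ n ih =>
    by_cases h : 0 ≤ k
    · simp only [halfLineSum, h, if_true]
      exact ((ha.mul (ih _)).add (hq.mul (ih _))).add (hb.mul (ih _))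
    · simp only [halfLineSum, h, if_false]
      fun_prop

lemma measurable_torusIntegrand
    (hstep : ∀ i ∈ S, (∀ j, i j = -1 ∨ i j = 0 ∨ i j = 1) ∧ i ≠ 0) {ε : ℝ} (h1 : ε < 1)
    (ρ : ℝ) (n : ℕ) : Measurable (torusIntegrand S w ρ n ε) := by
  have hA : Continuous fun θ => AC d S w (zOf d ε θ) := continuous_character_sum h1 _
  have hQ : Continuous fun θ => QC d S w (zOf d ε θ) := continuous_character_sum h1 _
  have hB : Continuous fun θ => BC d S w (zOf d ε θ) := continuous_character_sum h1 _
  have hz := (continuous_zOf (d := d) ε (Fin.last d)).measurable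
  have hU := (continuous_halfLineSum hA hQ hB n 0).measurable
  have hB' := hB.measurable
  have hA' := hA.measurable
  have hQ' := hQ.measurable
  unfold torusIntegrand halfLineKernel
  simp only [SbarC_eq hstep]
  refine Measurable.mul (Continuous.measurable (by fun_prop)) ?_
  refine Measurable.ite (measurableSet_lt hB'.norm measurable_const) hU ?_
  fun_prop

lemma norm_SbarC_le (hstep : ∀ i ∈ S, (∀ j, i j = -1 ∨ i j = 0 ∨ i j = 1) ∧ i ≠ 0)
    (hw : ∀ i ∈ S, 0 < w i) {ε : ℝ} (h0 : 0 < ε) (h1 : ε < 1) (θ : Fin (d + 1) → ℝ) :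
    ‖SbarC d S w (zOf d ε θ)‖ ≤ S1 d S w / (1 - ε) := by
  have hS := norm_coeffs_le hstep hw (norm_zOf_castSucc ε θ)
  have h2 : 0 < 1 - ε := by linarith
  rw [SbarC_eq hstep]
  refine norm_add₃_le.trans ?_
  rw [norm_mul, norm_mul, norm_inv, norm_zOf_last h1, le_div_iff₀ h2, add_mul,
    mul_assoc ‖BC d S w (zOf d ε θ)‖, inv_mul_cancel₀ h2.ne']
  nlinarith [norm_nonneg (AC d S w (zOf d ε θ)), norm_nonneg (QC d S w (zOf d ε θ)),
    mul_nonneg (norm_nonneg (AC d S w (zOf d ε θ))) h2.le,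
    mul_nonneg (mul_nonneg (norm_nonneg (AC d S w (zOf d ε θ))) h2.le) h0.le]

lemma integrable_torusIntegrand
    (hstep : ∀ i ∈ S, (∀ j, i j = -1 ∨ i j = 0 ∨ i j = 1) ∧ i ≠ 0)
    (hw : ∀ i ∈ S, 0 < w i) {ρ ε : ℝ} (h0 : 0 < ε) (h1 : ε < 1) (hρ : 0 < ρ) (n : ℕ) :
    Integrable (torusIntegrand S w ρ n ε) (Measure.pi fun _ => angleMeasure) := by
  refine integrable_pi_angleMeasure
    (C := 2 ^ d * S1 d S w ^ n + 2 ^ d * ((1 + S1 d S w / ρ) / ε * (S1 d S w / (1 - ε)) ^ n))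
    (measurable_torusIntegrand hstep h1 ρ n).aestronglyMeasurable fun θ => ?_
  have hS := norm_coeffs_le hstep hw (norm_zOf_castSucc ε θ)
  have hS0 : 0 ≤ S1 d S w := le_trans (by positivity) hS
  have h2 : 0 < 1 - ε := by linarith
  rcases lt_or_ge ‖BC d S w (zOf d ε θ)‖ ρ with hB | hB
  · refine (norm_torusIntegrand_le_of_lt n hB).trans (le_add_of_le_of_nonneg ?_ (by positivity))
    gcongr
  · refine (norm_torusIntegrand_le_of_le hstep hw h0 h1 hρ n hB).trans
      (le_add_of_nonneg_of_le (by positivity) ?_)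
    gcongr
    exact norm_SbarC_le hstep hw h0 h1 θ

/-- The weight of orthant walks as an integral over the torus `|z_j| = 1`, `|z_{d+1}| = 1 - ε`. -/
lemma integral_torusIntegrand
    (hstep : ∀ i ∈ S, (∀ j, i j = -1 ∨ i j = 0 ∨ i j = 1) ∧ i ≠ 0)
    (hw : ∀ i ∈ S, 0 < w i)
    (hsym : ∀ k : Fin d, SymmetricAxis (d + 1) S w (Fin.castSucc k))
    {ρ ε : ℝ} (h0 : 0 < ε) (h1 : ε < 1) (hρ : 0 < ρ) (n : ℕ) :
    ∫ θ, torusIntegrand S w ρ n ε θ ∂(Measure.pi fun _ => angleMeasure) =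
      (2 * (π : ℂ)) ^ (d + 1) * (walkWeight (d + 1) S w n : ℂ) := by
  have hmp := (measurePreserving_piFinSuccAbove (fun _ : Fin (d + 1) => angleMeasure)
    (Fin.last d)).symm
  rw [← hmp.integral_comp']
  have hI := (hmp.integrable_comp_emb (MeasurableEquiv.measurableEmbedding _)).2
    (integrable_torusIntegrand hstep hw h0 h1 hρ n)
  rw [Function.comp_def] at hI
  rw [integral_prod_symm _ hI, pow_succ', mul_assoc, walkWeight_eq_integral hstep hsym,
    ← integral_const_mul]
  congr 1
  ext θ
  have hins : ∀ φ : ℝ, (MeasurableEquiv.piFinSuccAbove (fun _ => ℝ) (Fin.last d)).symm (φ, θ) =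
      Fin.snoc (α := fun _ => ℝ) θ φ := by
    intro φ
    simp [MeasurableEquiv.piFinSuccAbove, Fin.insertNthEquiv]
  simp only [hins]
  have hc : ∀ (φ : ℝ) (j : Fin d), zOf d ε (Fin.snoc (α := fun _ => ℝ) θ φ) j.castSucc =
      unitPoint θ j.castSucc := by
    intro φ j
    rw [zOf_castSucc, unitPoint_castSucc, Fin.snoc_castSucc]
  simp only [torusIntegrand, SbarC_eq hstep, AC_congr (hc _), BC_congr (hc _), QC_congr (hc _),
    Fin.snoc_castSucc, zOf_last, Fin.snoc_last]
  rw [integral_const_mul, mul_left_comm]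
  congr 1
  by_cases hB : ‖BC d S w (unitPoint θ)‖ < ρ
  · simp only [hB, if_true]
    rw [integral_const, Complex.real_smul, angleMeasure]
    congr 1
    rw [Measure.real, Measure.restrict_apply_univ, Real.volume_Ioo,
      ENNReal.toReal_ofReal (by linarith [Real.pi_pos])]
    push_cast; ring
  · simp only [hB, if_false]
    have hB0 : BC d S w (unitPoint θ) ≠ 0 := by
      intro h; rw [h, norm_zero] at hB; exact hB hρ
    simpa using integral_halfLineKernel (r := 1 - ε) (by linarith) (by linarith)
      (AC d S w (unitPoint θ)) (QC d S w (unitPoint θ)) hB0 n 1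

end TorusIntegrand

end ZeroDrift

namespace ZeroDrift

section Phases

lemma norm_add_le_of_unit {u v : ℂ} (hu : ‖u‖ = 1) (hv : ‖v‖ = 1) :
    ‖u + v‖ ≤ 2 - ‖u - v‖ ^ 2 / 4 := by
  have h := parallelogram_law_with_norm ℝ u v
  rw [hu, hv] at h
  have h4 : ‖u - v‖ ^ 2 ≤ 4 := by nlinarith [norm_nonneg (u + v)]
  refine abs_le_of_sq_le_sq' ?_ (by linarith) |>.2
  nlinarith [sq_nonneg (‖u - v‖ ^ 2)]

/-- A weighted sum of unimodular numbers falls short of the total weight by a multiple of the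
squared distance of any two of them. -/
lemma norm_weighted_sum_le {ι : Type*} {S : Finset ι} {r : ι → ℝ} {u : ι → ℂ}
    (hr : ∀ i ∈ S, 0 ≤ r i) (hu : ∀ i ∈ S, ‖u i‖ = 1) {c : ℝ} (hc : 0 ≤ c) {i k : ι} (hi : i ∈ S)
    (hk : k ∈ S) (hci : c ≤ r i) (hck : c ≤ r k) :
    ‖∑ l ∈ S, (r l : ℂ) * u l‖ ≤ ∑ l ∈ S, r l - c / 4 * ‖u i - u k‖ ^ 2 := by
  have hbound : ∀ T ⊆ S, ‖∑ l ∈ T, (r l : ℂ) * u l‖ ≤ ∑ l ∈ T, r l := by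
    intro T hT
    refine (norm_sum_le _ _).trans (Finset.sum_le_sum fun l hl => ?_)
    rw [norm_mul, hu l (hT hl), Complex.norm_real, Real.norm_of_nonneg (hr l (hT hl)), mul_one]
  by_cases hik : i = k
  · subst hik
    simpa using hbound S subset_rfl
  · have hk' : k ∈ S.erase i := Finset.mem_erase.2 ⟨Ne.symm hik, hk⟩
    rw [← Finset.add_sum_erase S _ hi, ← Finset.add_sum_erase S r hi,
      ← Finset.add_sum_erase _ _ hk', ← Finset.add_sum_erase _ r hk', ← add_assoc, ← add_assoc]
    have h1 := hbound ((S.erase i).erase k)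
      ((Finset.erase_subset _ _).trans (Finset.erase_subset _ _))
    have h2 : ‖(r i : ℂ) * u i + (r k : ℂ) * u k‖ ≤ r i + r k - c / 4 * ‖u i - u k‖ ^ 2 := by
      have e : (r i : ℂ) * u i + (r k : ℂ) * u k =
          ((r i - c : ℝ) : ℂ) * u i + ((r k - c : ℝ) : ℂ) * u k + (c : ℂ) * (u i + u k) := by
        push_cast; ring
      rw [e]
      refine norm_add₃_le.trans ?_
      rw [norm_mul, norm_mul, norm_mul, Complex.norm_real, Complex.norm_real, Complex.norm_real,
        hu i hi, hu k hk, Real.norm_of_nonneg hc, Real.norm_of_nonneg (sub_nonneg.2 hci),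
        Real.norm_of_nonneg (sub_nonneg.2 hck)]
      nlinarith [mul_le_mul_of_nonneg_left (norm_add_le_of_unit (hu i hi) (hu k hk)) hc]
    refine (norm_add_le _ _).trans ?_
    linarith

lemma norm_prod_sub_prod_le_of_unit {ι : Type*} (T : Finset ι) {a b : ι → ℂ}
    (ha : ∀ j ∈ T, ‖a j‖ = 1) (hb : ∀ j ∈ T, ‖b j‖ = 1) :
    ‖∏ j ∈ T, a j - ∏ j ∈ T, b j‖ ≤ ∑ j ∈ T, ‖a j - b j‖ := by
  induction T using Finset.induction_on with
  | empty => simp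
  | insert k T hk ih =>
    rw [Finset.prod_insert hk, Finset.prod_insert hk, Finset.sum_insert hk]
    have ih := ih (fun j hj => ha j (Finset.mem_insert_of_mem hj))
      (fun j hj => hb j (Finset.mem_insert_of_mem hj))
    have hn : ‖∏ j ∈ T, b j‖ = 1 := by
      rw [norm_prod]
      exact Finset.prod_eq_one fun j hj => hb j (Finset.mem_insert_of_mem hj)
    calc _ = ‖a k * (∏ j ∈ T, a j - ∏ j ∈ T, b j) + (a k - b k) * ∏ j ∈ T, b j‖ := by ring_nf
      _ ≤ ‖a k‖ * ‖∏ j ∈ T, a j - ∏ j ∈ T, b j‖ + ‖a k - b k‖ * ‖∏ j ∈ T, b j‖ := by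
          rw [← norm_mul, ← norm_mul]; exact norm_add_le _ _
      _ ≤ _ := by
          rw [ha k (Finset.mem_insert_self _ _), hn]; linarith

lemma norm_zpow_sub_zpow_le {a b : ℂ} (ha : ‖a‖ = 1) (hb : ‖b‖ = 1) {m : ℤ}
    (hm : m = -1 ∨ m = 0 ∨ m = 1) : ‖a ^ m - b ^ m‖ ≤ ‖a - b‖ := by
  rcases hm with rfl | rfl | rfl
  · have ha0 : a ≠ 0 := norm_ne_zero_iff.1 (by rw [ha]; norm_num)
    have hb0 : b ≠ 0 := norm_ne_zero_iff.1 (by rw [hb]; norm_num)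
    rw [zpow_neg_one, zpow_neg_one, inv_sub_inv ha0 hb0, norm_div, norm_mul, ha, hb,
      norm_sub_rev]
    simp
  · simp
  · simp

variable {d : ℕ}

/-- The monomial of the step `i` in `S̄`. -/
def stepPhase (z : Fin (d + 1) → ℂ) (i : Fin (d + 1) → ℤ) : ℂ :=
  (∏ j : Fin d, z j.castSucc ^ i j.castSucc) * z (Fin.last d) ^ (-(i (Fin.last d)))

lemma norm_stepPhase {z : Fin (d + 1) → ℂ} (hz : ∀ j, ‖z j‖ = 1) (i : Fin (d + 1) → ℤ) :
    ‖stepPhase z i‖ = 1 := by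
  simp [stepPhase, norm_prod, norm_zpow, hz]

lemma stepPhase_pow (z : Fin (d + 1) → ℂ) (i : Fin (d + 1) → ℤ) (p : ℕ) :
    stepPhase (fun j => z j ^ p) i = stepPhase z i ^ p := by
  have h : ∀ (x : ℂ) (m : ℤ), (x ^ p) ^ m = (x ^ m) ^ p := by
    intro x m
    rw [← zpow_natCast, ← zpow_natCast, ← zpow_mul, ← zpow_mul, mul_comm]
  simp only [stepPhase, h, Finset.prod_pow, mul_pow]

lemma norm_stepPhase_sub_le {z z' : Fin (d + 1) → ℂ} (hz : ∀ j, ‖z j‖ = 1) (hz' : ∀ j, ‖z' j‖ = 1)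
    {i : Fin (d + 1) → ℤ} (hi : ∀ j, i j = -1 ∨ i j = 0 ∨ i j = 1) :
    ‖stepPhase z i - stepPhase z' i‖ ≤ ∑ j, ‖z j - z' j‖ := by
  have e : ∀ y : Fin (d + 1) → ℂ, stepPhase y i =
      ∏ j, y j ^ (if j = Fin.last d then -(i j) else i j) := by
    intro y
    rw [Fin.prod_univ_castSucc, stepPhase]
    simp [(Fin.castSucc_lt_last _).ne]
  rw [e, e]
  refine (norm_prod_sub_prod_le_of_unit _ (fun j _ => by rw [norm_zpow, hz, one_zpow])
    (fun j _ => by rw [norm_zpow, hz', one_zpow])).trans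
    (Finset.sum_le_sum fun j _ => norm_zpow_sub_zpow_le (hz j) (hz' j) ?_)
  have := hi j
  split_ifs <;> omega

lemma eq_of_norm_sub_lt_one {x y : ℂ} (hx : x ^ 4 = 1) (hy : y ^ 4 = 1) (h : ‖x - y‖ < 1) :
    x = y := by
  have hyn : ‖y‖ = 1 := by
    have : ‖y‖ ^ 4 = 1 := by rw [← norm_pow, hy, norm_one]
    exact (pow_eq_one_iff_of_nonneg (norm_nonneg _) (by norm_num)).1 this
  have hxn : ‖x‖ = 1 := by
    have : ‖x‖ ^ 4 = 1 := by rw [← norm_pow, hx, norm_one]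
    exact (pow_eq_one_iff_of_nonneg (norm_nonneg _) (by norm_num)).1 this
  have hpar := parallelogram_law_with_norm ℝ x y
  rw [hxn, hyn] at hpar
  have hfac : (x - y) * ((x + y) * (x ^ 2 + y ^ 2)) = 0 := by linear_combination hx - hy
  rcases mul_eq_zero.1 hfac with h1 | h1
  · exact sub_eq_zero.1 h1
  · exfalso
    rcases mul_eq_zero.1 h1 with h2 | h2
    · rw [h2, norm_zero] at hpar
      nlinarith [norm_nonneg (x - y)]
    · have h3 : ‖x - y‖ * ‖x + y‖ = 2 := by
        rw [← norm_mul, show (x - y) * (x + y) = 2 * x ^ 2 by linear_combination -h2, norm_mul,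
          norm_pow, hxn]
        norm_num
      nlinarith [norm_nonneg (x - y), norm_nonneg (x + y), sq_nonneg (‖x - y‖ - ‖x + y‖)]

lemma norm_exp_sub_exp_le (a b : ℝ) :
    ‖Complex.exp (Complex.I * a) - Complex.exp (Complex.I * b)‖ ≤ |a - b| := by
  have e : Complex.exp (Complex.I * a) - Complex.exp (Complex.I * b) =
      Complex.exp (Complex.I * b) * (Complex.exp (Complex.I * (a - b : ℝ)) - 1) := by
    rw [mul_sub, ← Complex.exp_add, mul_one]
    push_cast; ring_nf
  rw [e, norm_mul, Complex.norm_exp_I_mul_ofReal, one_mul]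
  exact Real.norm_exp_I_mul_ofReal_sub_one_le

lemma wOf_eq_exp (m : Fin (d + 1) → Fin 4) (j : Fin (d + 1)) :
    wOf d m j = Complex.exp (Complex.I * argOf d m j) := by
  rw [wOf, argOf]
  conv_lhs => rw [← Complex.exp_pi_div_two_mul_I, ← Complex.exp_nat_mul]
  congr 1
  push_cast; ring

lemma norm_wOf (m : Fin (d + 1) → Fin 4) (j : Fin (d + 1)) : ‖wOf d m j‖ = 1 := by
  rw [wOf_eq_exp, Complex.norm_exp_I_mul_ofReal]

/-- An angle whose exponential has fourth power close to `1` is close to a multiple of `π / 2`. -/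
lemma exists_near_quarter_turn {θ κ : ℝ} (hθ : θ ∈ Set.Ioo (-(π / 4)) (7 * π / 4))
    (h : ‖Complex.exp (Complex.I * θ) ^ 4 - 1‖ ≤ κ) :
    ∃ m : Fin 4, |θ - (m : ℕ) * π / 2| ≤ π / 8 * κ := by
  have hpi := Real.pi_pos
  have near : ∃ m : Fin 4, |θ - (m : ℕ) * π / 2| ≤ π / 4 := by
    rcases le_or_gt θ (π / 4) with h1 | h1
    · exact ⟨0, by rw [abs_le]; constructor <;> simp <;> linarith [hθ.1]⟩
    rcases le_or_gt θ (3 * π / 4) with h2 | h2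
    · exact ⟨1, by rw [abs_le]; constructor <;> simp <;> linarith⟩
    rcases le_or_gt θ (5 * π / 4) with h3 | h3
    · exact ⟨2, by rw [abs_le]; constructor <;> simp <;> linarith⟩
    · refine ⟨3, ?_⟩
      rw [abs_le, show (((3 : Fin 4) : ℕ) : ℝ) = 3 by norm_num]
      constructor <;> linarith [hθ.2]
  obtain ⟨m, hm⟩ := near
  refine ⟨m, ?_⟩
  set t := θ - (m : ℕ) * π / 2 with ht
  have e : Complex.exp (Complex.I * θ) ^ 4 = Complex.exp (Complex.I * (4 * t : ℝ)) := by
    rw [← Complex.exp_nat_mul, Complex.exp_eq_exp_iff_exists_int]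
    refine ⟨(m : ℕ), ?_⟩
    rw [ht]; push_cast; ring
  rw [e, Complex.norm_exp_I_mul_ofReal_sub_one, Real.norm_eq_abs, abs_mul,
    show 4 * t / 2 = 2 * t by ring] at h
  have hj := Real.mul_abs_le_abs_sin (x := 2 * t) (by rw [abs_mul, abs_two]; linarith)
  rw [abs_mul, abs_two] at hj
  rw [abs_two] at h
  have h5 : 2 / π * (2 * |t|) ≤ κ / 2 := by linarith
  calc |t| = π / 4 * (2 / π * (2 * |t|)) := by field_simp; norm_num
    _ ≤ π / 4 * (κ / 2) := by gcongr
    _ = _ := by ring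

end Phases

end ZeroDrift

namespace ZeroDrift

section OffBoxes

variable {d : ℕ} {S : Finset (Fin (d + 1) → ℤ)} {w : (Fin (d + 1) → ℤ) → ℝ}

lemma SbarC_eq_sum_stepPhase (z : Fin (d + 1) → ℂ) :
    SbarC d S w z = ∑ i ∈ S, (w i : ℂ) * stepPhase z i := by
  simp only [SbarC, stepPhase, mul_assoc]

lemma SbarC_zOf (ε : ℝ) (θ : Fin (d + 1) → ℝ) :
    SbarC d S w (zOf d ε θ) = ∑ i ∈ S, ((w i * (1 - ε) ^ (-(i (Fin.last d))) : ℝ) : ℂ) *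
      stepPhase (fun j => Complex.exp (Complex.I * θ j)) i := by
  rw [SbarC_eq_sum_stepPhase]
  refine Finset.sum_congr rfl fun i _ => ?_
  simp only [stepPhase, zOf_castSucc, zOf_last, mul_zpow]
  push_cast
  ring

lemma half_le_zpow {ε : ℝ} (h0 : 0 < ε) (h1 : ε ≤ 1 / 2) {m : ℤ} (hm : m = -1 ∨ m = 0 ∨ m = 1) :
    1 / 2 ≤ (1 - ε) ^ (-m) := by
  rcases hm with rfl | rfl | rfl
  · simp; linarith
  · norm_num
  · rw [zpow_neg_one]
    exact (by norm_num : (1 / 2 : ℝ) ≤ 1).trans ((one_le_inv₀ (by linarith)).2 (by linarith))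

lemma sum_radial_weights_le (hstep : ∀ i ∈ S, (∀ j, i j = -1 ∨ i j = 0 ∨ i j = 1) ∧ i ≠ 0)
    (hw : ∀ i ∈ S, 0 < w i)
    (hzero : (∑ i ∈ S.filter fun i => i (Fin.last d) = -1, w i)
        = ∑ i ∈ S.filter fun i => i (Fin.last d) = 1, w i)
    {ε : ℝ} (h0 : 0 < ε) (h1 : ε ≤ 1 / 2) :
    ∑ i ∈ S, w i * (1 - ε) ^ (-(i (Fin.last d))) ≤ S1 d S w + 2 * S1 d S w * ε ^ 2 := by
  have hsplit := sum_split_last hstep fun i => w i * (1 - ε) ^ (-(i (Fin.last d)))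
  have e : ∀ m : ℤ, (∑ i ∈ S.filter fun i => i (Fin.last d) = m,
      w i * (1 - ε) ^ (-(i (Fin.last d)))) =
      (∑ i ∈ S.filter fun i => i (Fin.last d) = m, w i) * (1 - ε) ^ (-m) := by
    intro m
    rw [Finset.sum_mul]
    exact Finset.sum_congr rfl fun i hi => by rw [(Finset.mem_filter.1 hi).2]
  rw [hsplit, e, e, e, hzero]
  have hS := S1_eq (w := w) hstep
  rw [hzero] at hS
  have hnn : ∀ m : ℤ, 0 ≤ ∑ i ∈ S.filter fun i => i (Fin.last d) = m, w i := fun m =>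
    Finset.sum_nonneg fun i hi => (hw i (Finset.mem_filter.1 hi).1).le
  have hb := hnn 1
  have hq := hnn 0
  set b := ∑ i ∈ S.filter fun i => i (Fin.last d) = 1, w i
  set q := ∑ i ∈ S.filter fun i => i (Fin.last d) = 0, w i
  have hinv : (1 - ε)⁻¹ ≤ 1 + ε + 2 * ε ^ 2 := by
    rw [inv_le_iff_one_le_mul₀ (by linarith)]
    nlinarith [mul_nonneg (sq_nonneg ε) (by linarith : 0 ≤ 1 - 2 * ε)]
  simp only [neg_neg, zpow_one, neg_zero, zpow_zero, zpow_neg_one]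
  rw [hS]
  nlinarith [mul_le_mul_of_nonneg_left hinv hb, mul_nonneg hb (sq_nonneg ε),
    mul_nonneg hq (sq_nonneg ε)]

/-- On the torus, `|S̄|` falls below `S(1)` as soon as two monomials have different phases. -/
lemma norm_SbarC_zOf_le (hstep : ∀ i ∈ S, (∀ j, i j = -1 ∨ i j = 0 ∨ i j = 1) ∧ i ≠ 0)
    (hw : ∀ i ∈ S, 0 < w i)
    (hzero : (∑ i ∈ S.filter fun i => i (Fin.last d) = -1, w i)
        = ∑ i ∈ S.filter fun i => i (Fin.last d) = 1, w i)
    {ε : ℝ} (h0 : 0 < ε) (h1 : ε ≤ 1 / 2) {c : ℝ} (hc : 0 ≤ c) (hcw : ∀ i ∈ S, c ≤ w i)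
    (θ : Fin (d + 1) → ℝ) {i k : Fin (d + 1) → ℤ} (hi : i ∈ S) (hk : k ∈ S) :
    ‖SbarC d S w (zOf d ε θ)‖ ≤ S1 d S w + 2 * S1 d S w * ε ^ 2 -
      c / 8 * ‖stepPhase (fun j => Complex.exp (Complex.I * θ j)) i -
        stepPhase (fun j => Complex.exp (Complex.I * θ j)) k‖ ^ 2 := by
  have hweight : ∀ l ∈ S, c / 2 ≤ w l * (1 - ε) ^ (-(l (Fin.last d))) := by
    intro l hl
    have := mul_le_mul (hcw l hl) (half_le_zpow h0 h1 ((hstep l hl).1 (Fin.last d)))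
      (by norm_num) (hw l hl).le
    linarith
  have h := norm_weighted_sum_le (S := S)
    (r := fun l => w l * (1 - ε) ^ (-(l (Fin.last d))))
    (u := stepPhase fun j => Complex.exp (Complex.I * θ j))
    (fun l hl => (by linarith : 0 ≤ c / 2).trans (hweight l hl))
    (fun l _ => norm_stepPhase (fun j => Complex.norm_exp_I_mul_ofReal _) l) (by linarith : 0 ≤ c / 2)
    hi hk (hweight i hi) (hweight k hk)
  rw [SbarC_zOf]
  have := sum_radial_weights_le hstep hw hzero h0 h1
  linarith

lemma stepPhase_update_neg {z : Fin (d + 1) → ℂ} {k : Fin d} (hz : z k.castSucc ≠ 0)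
    {i : Fin (d + 1) → ℤ} (hi : i k.castSucc = 1) :
    stepPhase z i =
      stepPhase z (Function.update i k.castSucc (-(i k.castSucc))) * z k.castSucc ^ 2 := by
  have hlast : Fin.last d ≠ k.castSucc := (Fin.castSucc_lt_last k).ne'
  rw [stepPhase, stepPhase, Function.update_of_ne hlast,
    ← Finset.mul_prod_erase _ _ (Finset.mem_univ k), ← Finset.mul_prod_erase
      (a := k) Finset.univ _ (Finset.mem_univ k), Function.update_self, hi]
  have e : ∏ j ∈ Finset.univ.erase k, z j.castSucc ^
      (Function.update i k.castSucc (-1) j.castSucc) =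
      ∏ j ∈ Finset.univ.erase k, z j.castSucc ^ i j.castSucc := by
    refine Finset.prod_congr rfl fun j hj => ?_
    rw [Function.update_of_ne]
    exact fun h => (Finset.mem_erase.1 hj).1 (Fin.castSucc_injective _ h)
  rw [e, zpow_neg_one, zpow_one]
  field_simp

/-- If all monomials have nearly equal phases, each symmetric coordinate is near `±1`. -/
lemma norm_sq_sub_one_le (hsym : ∀ k : Fin d, SymmetricAxis (d + 1) S w (Fin.castSucc k))
    (hfwd : ∀ k : Fin (d + 1), ∃ i ∈ S, i k = 1) {z : Fin (d + 1) → ℂ} (hz : ∀ j, ‖z j‖ = 1)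
    {η : ℝ} (hη : ∀ i ∈ S, ∀ k ∈ S, ‖stepPhase z i - stepPhase z k‖ ≤ η) (k : Fin d) :
    ‖z k.castSucc ^ 2 - 1‖ ≤ η := by
  obtain ⟨i, hi, hik⟩ := hfwd k.castSucc
  have h := hη _ hi _ (hsym k i hi).1
  have hz0 : z k.castSucc ≠ 0 := norm_ne_zero_iff.1 (by rw [hz]; norm_num)
  rw [stepPhase_update_neg hz0 hik] at h
  have e : ∀ a b : ℂ, a * b - a = a * (b - 1) := fun a b => by ring
  rwa [e, norm_mul, norm_stepPhase hz, one_mul] at h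

lemma norm_pow_four_sub_one_le_of_sq {x : ℂ} {η : ℝ} (hx : ‖x‖ = 1) (h : ‖x ^ 2 - 1‖ ≤ η) :
    ‖x ^ 4 - 1‖ ≤ 2 * η := by
  rw [show x ^ 4 - 1 = (x ^ 2 + 1) * (x ^ 2 - 1) by ring, norm_mul]
  refine mul_le_mul ?_ h (norm_nonneg _) (by norm_num)
  refine (norm_add_le _ _).trans ?_
  rw [norm_pow, hx, norm_one]; norm_num

/-- If all monomials have nearly equal phases, the last coordinate is near a fourth root of
unity. -/
lemma norm_pow_four_sub_one_le_last
    (hstep : ∀ i ∈ S, (∀ j, i j = -1 ∨ i j = 0 ∨ i j = 1) ∧ i ≠ 0)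
    (hsym : ∀ k : Fin d, SymmetricAxis (d + 1) S w (Fin.castSucc k))
    (hfwd : ∀ k : Fin (d + 1), ∃ i ∈ S, i k = 1)
    (hbwd : ∀ k : Fin (d + 1), ∃ i ∈ S, i k = -1) {z : Fin (d + 1) → ℂ} (hz : ∀ j, ‖z j‖ = 1)
    {η : ℝ} (hη : ∀ i ∈ S, ∀ k ∈ S, ‖stepPhase z i - stepPhase z k‖ ≤ η) :
    ‖z (Fin.last d) ^ 4 - 1‖ ≤ 2 * (d + 1) * η := by
  obtain ⟨i, hi, hil⟩ := hfwd (Fin.last d)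
  obtain ⟨k, hk, hkl⟩ := hbwd (Fin.last d)
  have hz0 : z (Fin.last d) ≠ 0 := norm_ne_zero_iff.1 (by rw [hz]; norm_num)
  set z' : Fin (d + 1) → ℂ := fun j => if j = Fin.last d then z j ^ 2 else 1 with hz'
  have hz2n : ∀ j, ‖z j ^ 2‖ = 1 := fun j => by rw [norm_pow, hz, one_pow]
  have hz'n : ∀ j, ‖z' j‖ = 1 := by
    intro j
    simp only [hz']
    split_ifs
    · exact hz2n j
    · exact norm_one
  have hcmp : ∀ l ∈ S, ‖stepPhase (fun j => z j ^ 2) l - stepPhase z' l‖ ≤ d * η := by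
    intro l hl
    refine (norm_stepPhase_sub_le hz2n hz'n (hstep l hl).1).trans ?_
    rw [Fin.sum_univ_castSucc]
    simp only [hz', if_true, sub_self, norm_zero, add_zero, (Fin.castSucc_lt_last _).ne, if_false]
    refine (Finset.sum_le_sum fun j _ => norm_sq_sub_one_le hsym hfwd hz hη j).trans ?_
    simp
  have hsq : ‖stepPhase z i ^ 2 - stepPhase z k ^ 2‖ ≤ 2 * η := by
    rw [sq_sub_sq, norm_mul]
    refine mul_le_mul ?_ (hη i hi k hk) (norm_nonneg _) (by norm_num)
    refine (norm_add_le _ _).trans ?_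
    rw [norm_stepPhase hz, norm_stepPhase hz]; norm_num
  have e : ∀ l, stepPhase z' l = (z (Fin.last d) ^ 2) ^ (-(l (Fin.last d))) := by
    intro l
    simp [stepPhase, hz', (Fin.castSucc_lt_last _).ne]
  have h1 := hcmp i hi
  have h2 := hcmp k hk
  rw [e, stepPhase_pow, hil, zpow_neg_one] at h1
  rw [e, stepPhase_pow, hkl, neg_neg, zpow_one] at h2
  have h3 : z (Fin.last d) ^ 4 - 1 = z (Fin.last d) ^ 2 *
      ((stepPhase z i ^ 2 - (z (Fin.last d) ^ 2)⁻¹) - (stepPhase z k ^ 2 - z (Fin.last d) ^ 2)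
        - (stepPhase z i ^ 2 - stepPhase z k ^ 2)) := by
    field_simp; ring
  rw [h3, norm_mul, hz2n, one_mul]
  refine (norm_sub_le _ _).trans ?_
  have := norm_sub_le (stepPhase z i ^ 2 - (z (Fin.last d) ^ 2)⁻¹)
    (stepPhase z k ^ 2 - z (Fin.last d) ^ 2)
  linarith

end OffBoxes

end ZeroDrift

namespace ZeroDrift

section ContributingPoints

variable {d : ℕ} {S : Finset (Fin (d + 1) → ℤ)} {w : (Fin (d + 1) → ℤ) → ℝ}

lemma norm_SC_wOf {m : Fin (d + 1) → Fin 4}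
    (hm : ∀ j : Fin d, m (Fin.castSucc j) = 0 ∨ m (Fin.castSucc j) = 2) :
    ‖SC d S w (wOf d m)‖ = ‖SbarC d S w (wOf d m)‖ := by
  have hreal : ∀ j : Fin d, (starRingEnd ℂ) (wOf d m j.castSucc) = wOf d m j.castSucc := by
    intro j
    rcases hm j with h | h <;> simp [wOf, h]
  have hlast : (starRingEnd ℂ) (wOf d m (Fin.last d)) = (wOf d m (Fin.last d))⁻¹ :=
    (Complex.inv_eq_conj (norm_wOf m _)).symm
  have e : SC d S w (wOf d m) = (starRingEnd ℂ) (SbarC d S w (wOf d m)) := by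
    rw [SC, SbarC, map_sum]
    refine Finset.sum_congr rfl fun i _ => ?_
    rw [Fin.prod_univ_castSucc]
    simp only [map_mul, map_prod, map_zpow₀, hreal, hlast, Complex.conj_ofReal, inv_zpow',
      neg_neg, mul_assoc]
  rw [e, RCLike.norm_conj]

lemma mem_GammaIdx_iff {m : Fin (d + 1) → Fin 4} :
    m ∈ GammaIdx d S w ↔
      (∀ j : Fin d, m (Fin.castSucc j) = 0 ∨ m (Fin.castSucc j) = 2) ∧
        ‖SbarC d S w (wOf d m)‖ = S1 d S w := by
  rw [GammaIdx, Finset.mem_filter]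
  simp only [Finset.mem_univ, true_and]
  refine and_congr_right fun hm => ?_
  rw [norm_div, norm_mul, norm_prod, norm_SC_wOf hm]
  simp [norm_wOf]

lemma stepPhase_wOf_pow_four (m : Fin (d + 1) → Fin 4) (i : Fin (d + 1) → ℤ) :
    stepPhase (wOf d m) i ^ 4 = 1 := by
  have h : (fun j => wOf d m j ^ 4) = fun _ => 1 := by
    funext j
    rw [wOf, ← pow_mul, mul_comm, pow_mul, Complex.I_pow_four, one_pow]
  rw [← stepPhase_pow, h]
  simp [stepPhase]

/-- If all monomials have nearly equal phases, the angles lie in a box around a contributing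
point. -/
lemma exists_mem_box (hstep : ∀ i ∈ S, (∀ j, i j = -1 ∨ i j = 0 ∨ i j = 1) ∧ i ≠ 0)
    (hw : ∀ i ∈ S, 0 < w i)
    (hsym : ∀ k : Fin d, SymmetricAxis (d + 1) S w (Fin.castSucc k))
    (hfwd : ∀ k : Fin (d + 1), ∃ i ∈ S, i k = 1)
    (hbwd : ∀ k : Fin (d + 1), ∃ i ∈ S, i k = -1) {θ : Fin (d + 1) → ℝ}
    (hθ : ∀ j, θ j ∈ Set.Ioo (-(π / 4)) (7 * π / 4)) {η : ℝ} (hη0 : 0 < η)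
    (hη1 : 10 * (d + 1) ^ 2 * η ≤ 1)
    (hη : ∀ i ∈ S, ∀ k ∈ S, ‖stepPhase (fun j => Complex.exp (Complex.I * θ j)) i -
      stepPhase (fun j => Complex.exp (Complex.I * θ j)) k‖ ≤ η) :
    ∃ m ∈ GammaIdx d S w, θ ∈ box d m ((d + 1) * η) := by
  set z : Fin (d + 1) → ℂ := fun j => Complex.exp (Complex.I * θ j) with hzdef
  have hz : ∀ j, ‖z j‖ = 1 := fun j => Complex.norm_exp_I_mul_ofReal _
  have hd : (0 : ℝ) ≤ d := Nat.cast_nonneg d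
  have hsq := norm_sq_sub_one_le hsym hfwd hz hη
  have hfour : ∀ j, ‖z j ^ 4 - 1‖ ≤ 2 * (d + 1) * η := by
    intro j
    refine Fin.lastCases ?_ (fun j => ?_) j
    · exact norm_pow_four_sub_one_le_last hstep hsym hfwd hbwd hz hη
    · refine (norm_pow_four_sub_one_le_of_sq (hz _) (hsq j)).trans ?_
      nlinarith [mul_nonneg hd hη0.le]
  choose m hm using fun j => exists_near_quarter_turn (hθ j) (hfour j)
  have hclose : ∀ j, |θ j - argOf d m j| < (d + 1) * η := by
    intro j
    refine (hm j).trans_lt ?_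
    have hpos : 0 < (d + 1) * η := by positivity
    nlinarith [Real.pi_lt_four]
  have hzw : ∀ j, ‖z j - wOf d m j‖ ≤ (d + 1) * η := fun j => by
    rw [wOf_eq_exp]
    exact (norm_exp_sub_exp_le _ _).trans (hclose j).le
  have hη2 : (d + 1) * η ≤ 1 / 10 := by nlinarith [mul_nonneg hd hη0.le, mul_nonneg hd hd]
  have hm02 : ∀ j : Fin d, m (Fin.castSucc j) = 0 ∨ m (Fin.castSucc j) = 2 := by
    intro j
    by_contra hcon
    have hval : wOf d m j.castSucc ^ 2 = -1 := by
      rw [wOf]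
      generalize m j.castSucc = x at hcon
      fin_cases x
      · simp at hcon
      · simp
      · simp at hcon
      · simp
    have h2 : ‖z j.castSucc ^ 2 - wOf d m j.castSucc ^ 2‖ ≤ 2 * ((d + 1) * η) := by
      rw [sq_sub_sq, norm_mul]
      refine mul_le_mul ?_ (hzw _) (norm_nonneg _) (by norm_num)
      refine (norm_add_le _ _).trans ?_
      rw [hz, norm_wOf]; norm_num
    rw [hval] at h2
    have h3 := norm_sub_le (z j.castSucc ^ 2 - -1) (z j.castSucc ^ 2 - 1)
    rw [show z j.castSucc ^ 2 - -1 - (z j.castSucc ^ 2 - 1) = 2 by ring, Complex.norm_ofNat] at h3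
    have := hsq j
    nlinarith [mul_nonneg hd hη0.le]
  obtain ⟨i₀, hi₀, -⟩ := hfwd (Fin.last d)
  have hphase : ∀ i ∈ S, stepPhase (wOf d m) i = stepPhase (wOf d m) i₀ := by
    intro i hi
    refine eq_of_norm_sub_lt_one (stepPhase_wOf_pow_four m i) (stepPhase_wOf_pow_four m i₀) ?_
    have hcmp : ∀ l ∈ S, ‖stepPhase z l - stepPhase (wOf d m) l‖ ≤ (d + 1) * ((d + 1) * η) := by
      intro l hl
      refine (norm_stepPhase_sub_le hz (norm_wOf m) (hstep l hl).1).trans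
        ((Finset.sum_le_sum fun j _ => hzw j).trans ?_)
      simp
    have e : stepPhase (wOf d m) i - stepPhase (wOf d m) i₀ =
        (stepPhase z i - stepPhase z i₀) - (stepPhase z i - stepPhase (wOf d m) i) +
          (stepPhase z i₀ - stepPhase (wOf d m) i₀) := by ring
    rw [e]
    have h1 := norm_add_le ((stepPhase z i - stepPhase z i₀) -
      (stepPhase z i - stepPhase (wOf d m) i)) (stepPhase z i₀ - stepPhase (wOf d m) i₀)
    have h2 := norm_sub_le (stepPhase z i - stepPhase z i₀)
      (stepPhase z i - stepPhase (wOf d m) i)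
    have h3 := hη i hi i₀ hi₀
    have h4 := hcmp i hi
    have h5 := hcmp i₀ hi₀
    nlinarith [mul_nonneg hd hη0.le]
  refine ⟨m, mem_GammaIdx_iff.2 ⟨hm02, ?_⟩, ?_⟩
  · have e : SbarC d S w (wOf d m) = (S1 d S w : ℂ) * stepPhase (wOf d m) i₀ := by
      rw [SbarC_eq_sum_stepPhase, S1, Complex.ofReal_sum, Finset.sum_mul]
      exact Finset.sum_congr rfl fun i hi => by rw [hphase i hi]
    rw [e, norm_mul, norm_stepPhase (norm_wOf m), mul_one, Complex.norm_real,
      Real.norm_of_nonneg]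
    exact Finset.sum_nonneg fun i hi => (hw i hi).le
  · intro j _
    have := abs_lt.1 (hclose j)
    constructor <;> linarith

/-- Off the boxes around contributing points, `|S̄|` is uniformly smaller than `S(1)`. -/
lemma norm_SbarC_zOf_le_of_notMem_box
    (hstep : ∀ i ∈ S, (∀ j, i j = -1 ∨ i j = 0 ∨ i j = 1) ∧ i ≠ 0)
    (hw : ∀ i ∈ S, 0 < w i)
    (hsym : ∀ k : Fin d, SymmetricAxis (d + 1) S w (Fin.castSucc k))
    (hfwd : ∀ k : Fin (d + 1), ∃ i ∈ S, i k = 1)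
    (hbwd : ∀ k : Fin (d + 1), ∃ i ∈ S, i k = -1)
    (hzero : (∑ i ∈ S.filter fun i => i (Fin.last d) = -1, w i)
        = ∑ i ∈ S.filter fun i => i (Fin.last d) = 1, w i)
    {ε : ℝ} (h0 : 0 < ε) (h1 : ε ≤ 1 / 2) {c : ℝ} (hc : 0 ≤ c) (hcw : ∀ i ∈ S, c ≤ w i)
    {δ : ℝ} (hδ0 : 0 < δ) (hδ1 : 10 * (d + 1) * δ ≤ 1) {θ : Fin (d + 1) → ℝ}
    (hθ : ∀ j, θ j ∈ Set.Ioo (-(π / 4)) (7 * π / 4))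
    (hbox : ∀ m ∈ GammaIdx d S w, θ ∉ box d m δ) :
    ‖SbarC d S w (zOf d ε θ)‖ ≤ S1 d S w + 2 * S1 d S w * ε ^ 2 -
      c / (8 * (d + 1) ^ 2) * δ ^ 2 := by
  have hd : (0 : ℝ) < d + 1 := by positivity
  by_cases h : ∀ i ∈ S, ∀ k ∈ S, ‖stepPhase (fun j => Complex.exp (Complex.I * θ j)) i -
      stepPhase (fun j => Complex.exp (Complex.I * θ j)) k‖ ≤ δ / (d + 1)
  · exfalso
    obtain ⟨m, hm, hθm⟩ := exists_mem_box hstep hw hsym hfwd hbwd hθ (by positivity)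
      (by rw [show 10 * ((d : ℝ) + 1) ^ 2 * (δ / (d + 1)) = 10 * (d + 1) * δ by field_simp]
          exact hδ1) h
    rw [mul_div_cancel₀ _ hd.ne'] at hθm
    exact hbox m hm hθm
  · push Not at h
    obtain ⟨i, hi, k, hk, hik⟩ := h
    refine (norm_SbarC_zOf_le hstep hw hzero h0 h1 hc hcw θ hi hk).trans ?_
    have hsq : (δ / (d + 1)) ^ 2 ≤ _ := pow_le_pow_left₀ (by positivity) hik.le 2
    have := mul_le_mul_of_nonneg_left hsq (by positivity : 0 ≤ c / 8)
    have e : c / (8 * ((d : ℝ) + 1) ^ 2) * δ ^ 2 = c / 8 * (δ / (d + 1)) ^ 2 := by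
      field_simp
    rw [e]
    linarith

/-- Near contributing points, `B` is bounded away from `0`. -/
lemma le_norm_BC_of_mem_box (hstep : ∀ i ∈ S, (∀ j, i j = -1 ∨ i j = 0 ∨ i j = 1) ∧ i ≠ 0)
    (hw : ∀ i ∈ S, 0 < w i) {m : Fin (d + 1) → Fin 4} (hm : m ∈ GammaIdx d S w) {δ : ℝ}
    (hδ0 : 0 < δ) (hδ1 : 10 * (d + 1) * δ ≤ 1) {θ : Fin (d + 1) → ℝ} (hθ : θ ∈ box d m δ) (ε : ℝ) :
    (∑ i ∈ S.filter fun i => i (Fin.last d) = 1, w i) / 2 ≤ ‖BC d S w (zOf d ε θ)‖ := by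
  set b := ∑ i ∈ S.filter fun i => i (Fin.last d) = 1, w i with hb
  have hb0 : 0 ≤ b := Finset.sum_nonneg fun i hi => (hw i (Finset.mem_filter.1 hi).1).le
  have hcenter : b ≤ ‖BC d S w (wOf d m)‖ := by
    have h1 := (mem_GammaIdx_iff.1 hm).2
    have h2 := norm_AC_add_norm_QC_le hstep hw (z := wOf d m) fun j => norm_wOf m _
    rw [SbarC_eq hstep] at h1
    have h3 := norm_add₃_le (a := QC d S w (wOf d m)) (b := AC d S w (wOf d m) *
      wOf d m (Fin.last d)) (c := BC d S w (wOf d m) * (wOf d m (Fin.last d))⁻¹)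
    rw [h1, norm_mul, norm_mul, norm_inv, norm_wOf, inv_one, mul_one, mul_one] at h3
    linarith
  have hdiff : ‖BC d S w (wOf d m) - BC d S w (zOf d ε θ)‖ ≤ b * (d * δ) := by
    rw [BC, BC, ← Finset.sum_sub_distrib, hb, Finset.sum_mul]
    refine (norm_sum_le _ _).trans (Finset.sum_le_sum fun i hi => ?_)
    have hiS := (Finset.mem_filter.1 hi).1
    rw [← mul_sub, norm_mul, Complex.norm_real, Real.norm_of_nonneg (hw i hiS).le]
    refine mul_le_mul_of_nonneg_left ?_ (hw i hiS).le
    refine (norm_prod_sub_prod_le_of_unit _ (fun j _ => by rw [norm_zpow, norm_wOf, one_zpow])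
      (fun j _ => by rw [norm_zpow, norm_zOf_castSucc, one_zpow])).trans ?_
    refine (Finset.sum_le_sum (g := fun _ => δ) fun j _ => ?_).trans (by simp)
    refine (norm_zpow_sub_zpow_le (norm_wOf m _) (norm_zOf_castSucc ε θ j)
      ((hstep i hiS).1 _)).trans ?_
    rw [wOf_eq_exp, zOf_castSucc]
    refine (norm_exp_sub_exp_le _ _).trans ?_
    have := hθ j.castSucc (Set.mem_univ _)
    rw [abs_le]
    constructor <;> linarith [this.1, this.2]
  have h4 := norm_sub_norm_le (BC d S w (wOf d m)) (BC d S w (zOf d ε θ))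
  have h5 : (d : ℝ) * δ ≤ 1 / 2 := by nlinarith [(Nat.cast_nonneg d : (0 : ℝ) ≤ d)]
  nlinarith [mul_le_mul_of_nonneg_left h5 hb0]

end ContributingPoints

end ZeroDrift

namespace ZeroDrift

section Assembly

variable {d : ℕ} {S : Finset (Fin (d + 1) → ℤ)} {w : (Fin (d + 1) → ℤ) → ℝ}

lemma measurableSet_box (m : Fin (d + 1) → Fin 4) (δ : ℝ) : MeasurableSet (box d m δ) :=
  MeasurableSet.univ_pi fun _ => measurableSet_Ioo

lemma box_subset_cube {δ : ℝ} (hδ : δ ≤ π / 4) (m : Fin (d + 1) → Fin 4) :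
    box d m δ ⊆ Set.univ.pi fun _ => Set.Ioo (-(π / 4)) (7 * π / 4) := by
  intro θ hθ j hj
  have h := hθ j hj
  have hm : ((m j : ℕ) : ℝ) ≤ 3 := by exact_mod_cast Nat.le_of_lt_succ (m j).isLt
  have hm0 : (0 : ℝ) ≤ (m j : ℕ) := Nat.cast_nonneg _
  have hpi := Real.pi_pos
  simp only [argOf] at h
  constructor
  · nlinarith [h.1]
  · nlinarith [h.2]

lemma pairwise_disjoint_box {δ : ℝ} (hδ : δ ≤ π / 4) (T : Set (Fin (d + 1) → Fin 4)) :
    T.Pairwise (Function.onFun Disjoint fun m => box d m δ) := by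
  intro m _ m' _ hne
  refine Set.disjoint_left.2 fun θ hθ hθ' => hne (funext fun j => ?_)
  have h := hθ j (Set.mem_univ _)
  have h' := hθ' j (Set.mem_univ _)
  simp only [argOf] at h h'
  have hpi := Real.pi_pos
  have h1 : ((m j : ℕ) : ℝ) < (m' j : ℕ) + 1 := by nlinarith [h.1, h'.2]
  have h2 : ((m' j : ℕ) : ℝ) < (m j : ℕ) + 1 := by nlinarith [h'.1, h.2]
  have h3 : (m j : ℕ) < (m' j : ℕ) + 1 := by exact_mod_cast h1
  have h4 : (m' j : ℕ) < (m j : ℕ) + 1 := by exact_mod_cast h2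
  exact Fin.ext (by omega)

lemma pi_angleMeasure_eq : (Measure.pi fun _ : Fin (d + 1) => angleMeasure) =
    volume.restrict (Set.univ.pi fun _ => Set.Ioo (-(π / 4)) (7 * π / 4)) :=
  (Measure.restrict_pi_pi (fun _ => volume) _).symm

lemma pi_angleMeasure_real_univ :
    (Measure.pi fun _ : Fin (d + 1) => angleMeasure).real Set.univ = (2 * π) ^ (d + 1) := by
  have hpi := Real.pi_pos
  have h : angleMeasure Set.univ = ENNReal.ofReal (2 * π) := by
    rw [angleMeasure, Measure.restrict_apply_univ, Real.volume_Ioo]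
    congr 1; ring
  rw [measureReal_def, Measure.pi_univ]
  simp only [h, Finset.prod_const, Finset.card_univ, Fintype.card_fin]
  rw [ENNReal.toReal_pow, ENNReal.toReal_ofReal (by positivity)]

lemma sum_forward_pos (hw : ∀ i ∈ S, 0 < w i) (hfwd : ∀ k : Fin (d + 1), ∃ i ∈ S, i k = 1) :
    0 < ∑ i ∈ S.filter fun i => i (Fin.last d) = 1, w i := by
  obtain ⟨i, hi, hil⟩ := hfwd (Fin.last d)
  exact Finset.sum_pos (fun i hi => hw i (Finset.mem_filter.1 hi).1)
    ⟨i, Finset.mem_filter.2 ⟨hi, hil⟩⟩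

lemma sum_forward_le (hw : ∀ i ∈ S, 0 < w i) :
    ∑ i ∈ S.filter (fun i => i (Fin.last d) = 1), w i ≤ S1 d S w :=
  Finset.sum_le_sum_of_subset_of_nonneg (Finset.filter_subset _ _) fun i hi _ => (hw i hi).le

/-- Bound for the torus integrand off the boxes around contributing points. -/
lemma norm_torusIntegrand_le_of_notMem_box
    (hstep : ∀ i ∈ S, (∀ j, i j = -1 ∨ i j = 0 ∨ i j = 1) ∧ i ≠ 0)
    (hw : ∀ i ∈ S, 0 < w i)
    (hsym : ∀ k : Fin d, SymmetricAxis (d + 1) S w (Fin.castSucc k))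
    (hfwd : ∀ k : Fin (d + 1), ∃ i ∈ S, i k = 1)
    (hbwd : ∀ k : Fin (d + 1), ∃ i ∈ S, i k = -1)
    (hzero : (∑ i ∈ S.filter fun i => i (Fin.last d) = -1, w i)
        = ∑ i ∈ S.filter fun i => i (Fin.last d) = 1, w i)
    {b : ℝ} (hb : b = ∑ i ∈ S.filter fun i => i (Fin.last d) = 1, w i)
    {ε : ℝ} (h0 : 0 < ε) (h1 : ε ≤ 1 / 2) {c : ℝ} (hc : 0 ≤ c) (hcw : ∀ i ∈ S, c ≤ w i)
    {δ : ℝ} (hδ0 : 0 < δ) (hδ1 : 10 * (d + 1) * δ ≤ 1) (n : ℕ) {θ : Fin (d + 1) → ℝ}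
    (hθ : ∀ j, θ j ∈ Set.Ioo (-(π / 4)) (7 * π / 4))
    (hbox : ∀ m ∈ GammaIdx d S w, θ ∉ box d m δ) :
    ‖torusIntegrand S w (b / 2) n ε θ‖ ≤ S1 d S w ^ n * (2 ^ d *
      ((1 - b / (2 * S1 d S w)) ^ n + (1 + S1 d S w / (b / 2)) / ε *
        Real.exp (n * (2 * ε ^ 2 - c / (8 * (d + 1) ^ 2 * S1 d S w) * δ ^ 2)))) := by
  have hb0 : 0 < b := hb ▸ sum_forward_pos hw hfwd
  have hbS : b ≤ S1 d S w := hb ▸ sum_forward_le hw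
  have hS : 0 < S1 d S w := hb0.trans_le hbS
  have hr0 : 0 ≤ 1 - b / (2 * S1 d S w) := by
    rw [sub_nonneg, div_le_one (by positivity)]; linarith
  have hK : 0 ≤ (1 + S1 d S w / (b / 2)) / ε := by positivity
  by_cases hB : ‖BC d S w (zOf d ε θ)‖ < b / 2
  · refine (norm_torusIntegrand_le_of_lt n hB).trans ?_
    have hle : ‖AC d S w (zOf d ε θ)‖ + ‖QC d S w (zOf d ε θ)‖ + ‖BC d S w (zOf d ε θ)‖ ≤
        S1 d S w * (1 - b / (2 * S1 d S w)) := by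
      have := norm_AC_add_norm_QC_le hstep hw (norm_zOf_castSucc ε θ)
      rw [← hb] at this
      rw [mul_sub, show S1 d S w * (b / (2 * S1 d S w)) = b / 2 by field_simp]
      linarith
    calc _ ≤ 2 ^ d * (S1 d S w * (1 - b / (2 * S1 d S w))) ^ n := by gcongr
      _ = S1 d S w ^ n * (2 ^ d * ((1 - b / (2 * S1 d S w)) ^ n + 0)) := by
          rw [mul_pow]; ring
      _ ≤ _ := by gcongr; positivity
  · refine (norm_torusIntegrand_le_of_le hstep hw h0 (by linarith) (by linarith) n
      (not_lt.1 hB)).trans ?_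
    set t := 2 * ε ^ 2 - c / (8 * (d + 1) ^ 2 * S1 d S w) * δ ^ 2 with ht
    have hle : ‖SbarC d S w (zOf d ε θ)‖ ≤ S1 d S w * Real.exp t := by
      refine (norm_SbarC_zOf_le_of_notMem_box hstep hw hsym hfwd hbwd hzero h0 h1 hc hcw hδ0 hδ1
        hθ hbox).trans ?_
      calc _ = S1 d S w * (t + 1) := by rw [ht]; field_simp; ring
        _ ≤ _ := by gcongr; exact Real.add_one_le_exp t
    calc _ ≤ 2 ^ d * ((1 + S1 d S w / (b / 2)) / ε * (S1 d S w * Real.exp t) ^ n) := by gcongr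
      _ = S1 d S w ^ n * (2 ^ d * (0 + (1 + S1 d S w / (b / 2)) / ε * Real.exp (n * t))) := by
          rw [mul_pow, ← Real.exp_nat_mul]; ring
      _ ≤ _ := by gcongr; positivity

/-- The residue representation with explicit error term. -/
lemma norm_walkWeight_sub_sum_resIntegral_le
    (hstep : ∀ i ∈ S, (∀ j, i j = -1 ∨ i j = 0 ∨ i j = 1) ∧ i ≠ 0)
    (hw : ∀ i ∈ S, 0 < w i)
    (hsym : ∀ k : Fin d, SymmetricAxis (d + 1) S w (Fin.castSucc k))
    (hfwd : ∀ k : Fin (d + 1), ∃ i ∈ S, i k = 1)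
    (hbwd : ∀ k : Fin (d + 1), ∃ i ∈ S, i k = -1)
    (hzero : (∑ i ∈ S.filter fun i => i (Fin.last d) = -1, w i)
        = ∑ i ∈ S.filter fun i => i (Fin.last d) = 1, w i)
    {b : ℝ} (hb : b = ∑ i ∈ S.filter fun i => i (Fin.last d) = 1, w i)
    {ε : ℝ} (h0 : 0 < ε) (h1 : ε ≤ 1 / 2) {c : ℝ} (hc : 0 ≤ c) (hcw : ∀ i ∈ S, c ≤ w i)
    {δ : ℝ} (hδ0 : 0 < δ) (hδ1 : 10 * (d + 1) * δ ≤ 1) (n : ℕ) :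
    ‖(walkWeight (d + 1) S w n : ℂ) - ∑ m ∈ GammaIdx d S w,
        ((2 * (π : ℂ) * Complex.I) ^ (d + 1))⁻¹ * resIntegral d S w n ε δ m‖ ≤
      S1 d S w ^ n * (2 ^ d *
        ((1 - b / (2 * S1 d S w)) ^ n + (1 + S1 d S w / (b / 2)) / ε *
          Real.exp (n * (2 * ε ^ 2 - c / (8 * (d + 1) ^ 2 * S1 d S w) * δ ^ 2)))) := by
  have hb0 : 0 < b := hb ▸ sum_forward_pos hw hfwd
  have hρ : 0 < b / 2 := by linarith
  have hε1 : ε < 1 := by linarith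
  have hpi := Real.pi_gt_three
  have hδ : δ ≤ π / 4 := by nlinarith [mul_nonneg (Nat.cast_nonneg d : (0 : ℝ) ≤ d) hδ0.le]
  set f := torusIntegrand S w (b / 2) n ε with hf
  set μ : Measure (Fin (d + 1) → ℝ) := Measure.pi fun _ => angleMeasure with hμ
  set N := ⋃ m ∈ GammaIdx d S w, box d m δ with hN
  have hNm : MeasurableSet N := Finset.measurableSet_biUnion _ fun m _ => measurableSet_box m δ
  have hint : Integrable f μ := integrable_torusIntegrand hstep hw h0 hε1 hρ n
  have hres : ∀ m ∈ GammaIdx d S w, resIntegral d S w n ε δ m =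
      Complex.I ^ (d + 1) * ∫ θ in box d m δ, f θ ∂μ := by
    intro m hm
    rw [hμ, pi_angleMeasure_eq, Measure.restrict_restrict_of_subset (box_subset_cube hδ m),
      ← integral_const_mul]
    refine setIntegral_congr_fun (measurableSet_box m δ) fun θ hθ => ?_
    refine resIntegrand_eq h0 hε1 hρ n ?_
    rw [hb]
    exact le_norm_BC_of_mem_box hstep hw hm hδ0 hδ1 hθ ε
  have hsum : ∑ m ∈ GammaIdx d S w,
      ((2 * (π : ℂ) * Complex.I) ^ (d + 1))⁻¹ * resIntegral d S w n ε δ m =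
      ((2 * (π : ℂ)) ^ (d + 1))⁻¹ * ∫ θ in N, f θ ∂μ := by
    rw [hN, integral_biUnion_finset _ (fun m _ => measurableSet_box m δ)
      (pairwise_disjoint_box hδ _) (fun m _ => hint.integrableOn), Finset.mul_sum]
    refine Finset.sum_congr rfl fun m hm => ?_
    rw [hres m hm, mul_pow, mul_inv, ← mul_assoc, mul_assoc _ _ (Complex.I ^ (d + 1)),
      inv_mul_cancel₀ (pow_ne_zero _ Complex.I_ne_zero), mul_one]
  have hpi0 : (2 * (π : ℂ)) ^ (d + 1) ≠ 0 :=
    pow_ne_zero _ (mul_ne_zero two_ne_zero (Complex.ofReal_ne_zero.2 Real.pi_ne_zero))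
  have hwalk : (walkWeight (d + 1) S w n : ℂ) = ((2 * (π : ℂ)) ^ (d + 1))⁻¹ * ∫ θ, f θ ∂μ := by
    rw [hf, hμ, integral_torusIntegrand hstep hw hsym h0 hε1 hρ n, inv_mul_cancel_left₀ hpi0]
  rw [hsum, hwalk, ← mul_sub, ← integral_add_compl hNm hint, add_sub_cancel_left, norm_mul,
    norm_inv]
  have hnorm : ‖(2 * (π : ℂ)) ^ (d + 1)‖ = (2 * π) ^ (d + 1) := by
    rw [norm_pow, norm_mul, Complex.norm_real, Real.norm_of_nonneg Real.pi_pos.le]; norm_num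
  rw [hnorm]
  have hae : ∀ᵐ θ ∂μ.restrict Nᶜ, ‖f θ‖ ≤ S1 d S w ^ n * (2 ^ d *
        ((1 - b / (2 * S1 d S w)) ^ n + (1 + S1 d S w / (b / 2)) / ε *
          Real.exp (n * (2 * ε ^ 2 - c / (8 * (d + 1) ^ 2 * S1 d S w) * δ ^ 2)))) := by
    rw [ae_restrict_iff' hNm.compl, hμ, pi_angleMeasure_eq,
      ae_restrict_iff' (MeasurableSet.univ_pi fun _ => measurableSet_Ioo)]
    refine Eventually.of_forall fun θ hθ hθN => ?_
    refine norm_torusIntegrand_le_of_notMem_box hstep hw hsym hfwd hbwd hzero hb h0 h1 hc hcw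
      hδ0 hδ1 n (fun j => hθ j (Set.mem_univ _)) fun m hm hmem => hθN ?_
    exact Set.mem_biUnion hm hmem
  have hle := norm_integral_le_of_norm_le_const hae
  have hvol : (μ.restrict Nᶜ).real Set.univ ≤ (2 * π) ^ (d + 1) := by
    rw [← pi_angleMeasure_real_univ, measureReal_restrict_apply_univ]
    exact measureReal_mono (Set.subset_univ _)
  rw [inv_mul_le_iff₀ (by positivity), mul_comm]
  refine hle.trans (mul_le_mul_of_nonneg_left hvol ?_)
  have hbS : b ≤ S1 d S w := hb ▸ sum_forward_le hw
  have hS : 0 < S1 d S w := hb0.trans_le hbS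
  have hr0 : 0 ≤ 1 - b / (2 * S1 d S w) := by
    rw [sub_nonneg, div_le_one (by positivity)]; linarith
  positivity

end Assembly

lemma tendsto_rpow_mul_exp_neg_mul_rpow (s : ℝ) {c γ : ℝ} (hc : 0 < c) (hγ : 0 < γ) :
    Tendsto (fun x : ℝ => x ^ s * Real.exp (-c * x ^ γ)) atTop (nhds 0) := by
  refine ((tendsto_rpow_mul_exp_neg_mul_atTop_nhds_zero (s / γ) c hc).comp
    (tendsto_rpow_atTop hγ)).congr' ?_
  filter_upwards [eventually_ge_atTop 0] with x hx
  rw [Function.comp_apply, ← Real.rpow_mul hx, mul_div_cancel₀ _ hγ.ne']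

/-- The error term of the residue representation decays faster than any power. -/
lemma tendsto_pow_mul_error {r C K α c γ : ℝ} (hr0 : 0 ≤ r) (hr1 : r < 1) (hc : 0 < c)
    (hγ : 0 < γ) (m : ℕ) :
    Tendsto (fun n : ℕ => (n : ℝ) ^ m *
      (C * (r ^ n + K * ((n : ℝ) ^ α * Real.exp (-c * (n : ℝ) ^ γ))))) atTop (nhds 0) := by
  have h1 := tendsto_pow_const_mul_const_pow_of_abs_lt_one m (by rwa [abs_of_nonneg hr0] : |r| < 1)
  have h2 := (tendsto_rpow_mul_exp_neg_mul_rpow (m + α) hc hγ).comp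
    tendsto_natCast_atTop_atTop
  have h3 := (h1.add (h2.const_mul K)).const_mul C
  simp only [mul_zero, add_zero] at h3
  refine h3.congr' ?_
  filter_upwards [eventually_gt_atTop 0] with n hn
  have hn' : (0 : ℝ) < n := Nat.cast_pos.2 hn
  simp only [Function.comp_apply]
  rw [Real.rpow_add hn', Real.rpow_natCast]
  ring

lemma exists_pos_le_of_finset {ι : Type*} (S : Finset ι) {w : ι → ℝ} (hw : ∀ i ∈ S, 0 < w i) :
    ∃ c, 0 < c ∧ ∀ i ∈ S, c ≤ w i := by
  induction S using Finset.induction_on with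
  | empty => exact ⟨1, one_pos, by simp⟩
  | insert k T hk ih =>
    obtain ⟨c, hc, hcT⟩ := ih fun i hi => hw i (Finset.mem_insert_of_mem hi)
    refine ⟨min c (w k), lt_min hc (hw k (Finset.mem_insert_self _ _)), fun i hi => ?_⟩
    rcases Finset.mem_insert.1 hi with rfl | hi
    · exact min_le_right _ _
    · exact (min_le_left _ _).trans (hcT i hi)

end ZeroDrift

/-- Proposition (residue representation): `s_n` equals the sum over `w ∈ Γ` of the
residue integrals over `N_w`, up to an error `O(S(1)^n e_n)` with `e_n` decaying
faster than any fixed power of `n`. -/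
theorem residue_representation
    (d : ℕ) (S : Finset (Fin (d + 1) → ℤ)) (w : (Fin (d + 1) → ℤ) → ℝ)
    (hstep : ∀ i ∈ S, (∀ j, i j = -1 ∨ i j = 0 ∨ i j = 1) ∧ i ≠ 0)
    (hw : ∀ i ∈ S, 0 < w i)
    (hsym : ∀ k : Fin d, SymmetricAxis (d + 1) S w (Fin.castSucc k))
    (hfwd : ∀ k : Fin (d + 1), ∃ i ∈ S, i k = 1)
    (hbwd : ∀ k : Fin (d + 1), ∃ i ∈ S, i k = -1)
    (hzero : (∑ i ∈ S.filter fun i => i (Fin.last d) = -1, w i)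
        = ∑ i ∈ S.filter fun i => i (Fin.last d) = 1, w i)
    (α β : ℝ) (hα : 1 / 2 < α) (hαβ : α < 2 * β) (hsum : 1 < α + β)
    (hβ1 : 1 / 3 < β) (hβ2 : β < 1 / 2) :
    ∃ e : ℕ → ℝ,
      (∀ m : ℕ, Tendsto (fun n : ℕ => (n : ℝ) ^ m * e n) atTop (nhds 0)) ∧
      ∀ᶠ n : ℕ in atTop,
        ‖(walkWeight (d + 1) S w n : ℂ) -
            ∑ m ∈ ZeroDrift.GammaIdx d S w,
              ((2 * (π : ℂ) * Complex.I) ^ (d + 1))⁻¹ *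
                ZeroDrift.resIntegral d S w n ((n : ℝ) ^ (-α)) ((n : ℝ) ^ (-β)) m‖
          ≤ ZeroDrift.S1 d S w ^ n * e n := by
  obtain ⟨c, hc, hcw⟩ := ZeroDrift.exists_pos_le_of_finset S hw
  set b := ∑ i ∈ S.filter fun i => i (Fin.last d) = 1, w i with hb
  have hb0 : 0 < b := ZeroDrift.sum_forward_pos hw hfwd
  have hbS : b ≤ ZeroDrift.S1 d S w := ZeroDrift.sum_forward_le hw
  have hS : 0 < ZeroDrift.S1 d S w := hb0.trans_le hbS
  set σ := ZeroDrift.S1 d S w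
  set c' := c / (8 * (d + 1) ^ 2 * σ) with hc'
  have hc'0 : 0 < c' := by positivity
  have hr0 : 0 ≤ 1 - b / (2 * σ) := by
    rw [sub_nonneg, div_le_one (by positivity)]; linarith
  have hr1 : 1 - b / (2 * σ) < 1 := by
    have : 0 < b / (2 * σ) := by positivity
    linarith
  refine ⟨fun n => 2 ^ d * ((1 - b / (2 * σ)) ^ n + (1 + σ / (b / 2)) * Real.exp 2 *
    ((n : ℝ) ^ α * Real.exp (-c' * (n : ℝ) ^ (1 - 2 * β)))),
    ZeroDrift.tendsto_pow_mul_error hr0 hr1 hc'0 (by linarith), ?_⟩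
  have hεlim : Tendsto (fun n : ℕ => (n : ℝ) ^ (-α)) atTop (nhds 0) :=
    (tendsto_rpow_neg_atTop (by linarith)).comp tendsto_natCast_atTop_atTop
  have hδlim : Tendsto (fun n : ℕ => 10 * ((d : ℝ) + 1) * (n : ℝ) ^ (-β)) atTop (nhds 0) := by
    simpa using ((tendsto_rpow_neg_atTop (by linarith : 0 < β)).comp
      tendsto_natCast_atTop_atTop).const_mul (10 * ((d : ℝ) + 1))
  filter_upwards [eventually_gt_atTop 0, hεlim.eventually_le_const (by norm_num : (0 : ℝ) < 1 / 2),
    hδlim.eventually_le_const one_pos] with n hn hε hδ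
  have hn0 : (0 : ℝ) < n := Nat.cast_pos.2 hn
  have hn1 : (1 : ℝ) ≤ n := Nat.one_le_cast.2 hn
  refine (ZeroDrift.norm_walkWeight_sub_sum_resIntegral_le hstep hw hsym hfwd hbwd hzero hb
    (Real.rpow_pos_of_pos hn0 _) hε hc.le hcw (Real.rpow_pos_of_pos hn0 _) hδ n).trans ?_
  have hpow : ∀ s : ℝ, (n : ℝ) * ((n : ℝ) ^ (-s)) ^ 2 = (n : ℝ) ^ (1 - 2 * s) := by
    intro s
    rw [← Real.rpow_natCast, ← Real.rpow_mul hn0.le]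
    nth_rewrite 1 [← Real.rpow_one (n : ℝ)]
    rw [← Real.rpow_add hn0]
    congr 1; push_cast; ring
  have hεn : (n : ℝ) * ((n : ℝ) ^ (-α)) ^ 2 ≤ 1 := by
    rw [hpow]
    exact Real.rpow_le_one_of_one_le_of_nonpos hn1 (by linarith)
  have hexp : Real.exp (n * (2 * ((n : ℝ) ^ (-α)) ^ 2 - c' * ((n : ℝ) ^ (-β)) ^ 2)) ≤
      Real.exp 2 * Real.exp (-c' * (n : ℝ) ^ (1 - 2 * β)) := by
    rw [← Real.exp_add, Real.exp_le_exp, ← hpow β]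
    linarith
  have hinv : (1 + σ / (b / 2)) / (n : ℝ) ^ (-α) = (1 + σ / (b / 2)) * (n : ℝ) ^ α := by
    rw [Real.rpow_neg hn0.le, div_inv_eq_mul]
  rw [hinv]
  calc _ ≤ σ ^ n * (2 ^ d * ((1 - b / (2 * σ)) ^ n + (1 + σ / (b / 2)) * (n : ℝ) ^ α *
        (Real.exp 2 * Real.exp (-c' * (n : ℝ) ^ (1 - 2 * β))))) := by gcongr
    _ = _ := by ring

end
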